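/- For every real c with 0 < c < 1 there exists η > 0 such that |Forb*_{n,η}(C₅,c)| / |Forb*_n(C₅,c)| → 0 as n → ∞. In other words, almost all graphs on n vertices with ⌊c·C(n,2)⌋ edges and no induced C₅ contain a clique or an independent set of size at least ηn. -/

import Mathlib

/-!
Since `C₅` is self-complementary, complementation reduces the claim to `c ≤ 1/2`. Put
`p = min (2c) (1/2)` and weigh each graph by its probability in the binomial random graph `G(n, p)`;
graphs with the same number of edges have equal weights, so cardinalities may be compared through
weights. Write `α = -log (1 - p)`.

*Upper bound* (`bad_weight_le`). Let `G` have no induced `C₅` and only homogeneous sets smaller than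
`η n`. Take a Szemerédi partition into `M` classes and call a pair of classes grey if it is uniform
with density bounded away from `0` and `1`. Three pairwise grey classes yield an induced `C₅`
(`grey_triangle`), so by Turán's theorem at most `M² / 4` pairs are grey. As homogeneous sets are
small, every class contains linearly many disjoint triples inducing a path or the complement of one,
all of the same kind, and linearly many disjoint edges, as well as non-edges. For a triple in one
class of a grey pair and a suitable pair of vertices in the other, one of the `2⁶` patterns of cross
adjacencies would complete an induced `C₅` and must be avoided; for disjoint triples and pairs these
events are independent, and each has probability at most `1 - p⁶`. The adjacencies between classes
of density close to `0` or `1` are determined up to few deviations, so each of them contributes a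
factor at most `1 - p` (here `p ≤ 1/2`). The partition, the triples and pairs and the deviations
together form a certificate (`Cert`, `exists_cert`); the certificates are so few (`card_cert_le`)
that a union bound gives total weight at most `exp (-n² (α / 4 + δ))`: the gain `δ` comes from the
grey pairs, and the exponent is least when a quarter of `M²` is grey.

*Lower bound* (`choose_le_forb`, `exists_split`, `binom_lower`). A graph whose lower half is
independent, whose upper half is a clique joined completely to an independent set, and whose
`N ≈ n² / 4` cross pairs are arbitrary, has no induced `C₅`. The clique being chosen so that about
`p N` cross edges remain, such graphs with the required number of edges have weight at least
`exp (-α n² / 4 - o(n²))`: the pairs inside the halves contribute `exp (-α n² / 4)`, being all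
non-edges unless `p = 1/2`, and the cross pairs a binomial probability near the mean.

Dividing the two bounds gives the theorem (`ratio_bound`, `main_half`, `main_all`).
-/

open Finset SimpleGraph
open scoped Classical

/-- Number of edges of a graph. -/
noncomputable def edgeCount {V : Type} (G : SimpleGraph V) : ℕ := Nat.card G.edgeSet
/-- `G` contains an induced cycle of length 5, i.e. an induced copy of `C₅`. -/
def HasInducedC5 {V : Type} (G : SimpleGraph V) : Prop :=
  Nonempty (SimpleGraph.cycleGraph 5 ↪g G)
/-- `hom(G)`: the maximum size of a homogeneous set of `G`, i.e. of a set of vertices inducing a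
complete or an empty graph. -/
noncomputable def homNum {V : Type} [Fintype V] (G : SimpleGraph V) : ℕ :=
  sSup {m | ∃ s : Finset V, s.card = m ∧ (G.IsClique ↑s ∨ Gᶜ.IsClique ↑s)}

/-- `Forb*_n(C₅,c)`: the graphs on vertex set `{1,…,n}` with exactly `⌊c·C(n,2)⌋` edges and no
induced cycle of length 5. -/
noncomputable def ForbC5 (n : ℕ) (c : ℝ) : Finset (SimpleGraph (Fin n)) :=
  univ.filter fun G => ¬ HasInducedC5 G ∧ edgeCount G = ⌊c * (n.choose 2 : ℝ)⌋₊

/-- `Forb*_{n,η}(C₅,c)`: the graphs in `Forb*_n(C₅,c)` with `hom(G) < ηn`. -/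
noncomputable def ForbC5eta (n : ℕ) (c η : ℝ) : Finset (SimpleGraph (Fin n)) :=
  (ForbC5 n c).filter fun G => (homNum G : ℝ) < η * n

/-! ### Three pairwise grey classes contain an induced `C₅` -/

/-- One-sided regularity of a relation `R` on `A × B`: between any subsets of `A` and `B` of relative
size at least `ε` the density of `R` is at least `γ`. -/
def LowReg {V : Type} (R : V → V → Prop) (ε γ : ℝ) (A B : Finset V) : Prop :=
  ∀ A' ⊆ A, ∀ B' ⊆ B, ε * #A ≤ #A' → ε * #B ≤ #B' →
    γ * (#A' * #B') ≤ (#{x ∈ A' ×ˢ B' | R x.1 x.2} : ℝ)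

lemma card_filter_prod_eq_sum {V : Type} (R : V → V → Prop) (A B : Finset V) :
    #{x ∈ A ×ˢ B | R x.1 x.2} = ∑ x ∈ A, #{y ∈ B | R x y} := by
  simp only [card_filter, sum_product]

/-- Fewer than `ε |A|` elements of `A` have fewer than `γ |B|` related elements in `B`. -/
lemma LowReg.card_bad_lt {V : Type} {R : V → V → Prop} {ε γ : ℝ} {A B : Finset V}
    (h : LowReg R ε γ A B) (hε : 0 < ε) (hε1 : ε ≤ 1) (hA : A.Nonempty) (hB : B.Nonempty) :
    (#{x ∈ A | (#{y ∈ B | R x y} : ℝ) < γ * #B} : ℝ) < ε * #A := by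
  by_contra! hc
  set A' := {x ∈ A | (#{y ∈ B | R x y} : ℝ) < γ * #B} with hA'
  have hApos : (0 : ℝ) < #A := by exact_mod_cast hA.card_pos
  have hne : A'.Nonempty := by
    rw [← card_pos]
    have : (0 : ℝ) < #A' := lt_of_lt_of_le (by positivity) hc
    exact_mod_cast this
  have h1 := h A' (filter_subset _ _) B subset_rfl hc
    (by have : (0 : ℝ) ≤ #B := by positivity
        nlinarith)
  rw [card_filter_prod_eq_sum] at h1
  push_cast at h1
  have h2 : ∑ x ∈ A', (#{y ∈ B | R x y} : ℝ) < ∑ x ∈ A', γ * #B :=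
    sum_lt_sum_of_nonempty hne (fun x hx => (mem_filter.1 hx).2)
  rw [sum_const, nsmul_eq_mul] at h2
  nlinarith

lemma LowReg.restrict {V : Type} {R : V → V → Prop} {ε γ : ℝ} {A B A₁ B₁ : Finset V}
    (h : LowReg R ε γ A B) (hγ : 0 < γ) (hε : 0 < ε) (hA : A₁ ⊆ A) (hB : B₁ ⊆ B)
    (hA1 : γ * #A ≤ #A₁) (hB1 : γ * #B ≤ #B₁) : LowReg R (ε / γ) γ A₁ B₁ := by
  intro A' hA' B' hB' h1 h2
  have key : ∀ a b c : ℝ, γ * a ≤ b → ε / γ * b ≤ c → ε * a ≤ c := by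
    intro a b c h h'
    calc ε * a = ε / γ * (γ * a) := by field_simp
      _ ≤ ε / γ * b := by gcongr
      _ ≤ c := h'
  exact h A' (hA'.trans hA) B' (hB'.trans hB) (key _ _ _ hA1 h1) (key _ _ _ hB1 h2)

/-- Embedding lemma: from classes that are pairwise one-sidedly regular one can choose representatives
with all the prescribed relations. The representatives are chosen one at a time, each later class
being restricted to the elements related to the one just chosen; this turns `ε` into `ε / γ`. -/
theorem LowReg.embed {V : Type} {γ : ℝ} (hγ : 0 < γ) (hγ1 : γ ≤ 1) (k : ℕ) :
    ∀ (ε : ℝ) (X : Fin k → Finset V) (R : Fin k → Fin k → V → V → Prop), 0 < ε →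
      ε * k ≤ γ ^ k → (∀ i, (X i).Nonempty) →
      (∀ i j, i < j → LowReg (R i j) ε γ (X i) (X j)) →
      ∃ x : Fin k → V, (∀ i, x i ∈ X i) ∧ ∀ i j, i < j → R i j (x i) (x j) := by
  induction k with
  | zero => intro ε X R _ _ _ _; exact ⟨fun i => i.elim0, fun i => i.elim0, fun i => i.elim0⟩
  | succ k ih =>
    intro ε X R hε hεk hX hreg
    have hp1 : γ ^ (k + 1) ≤ 1 := pow_le_one₀ hγ.le hγ1
    push_cast at hεk
    have hk0 : (0 : ℝ) ≤ k := by positivity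
    have hεle : ε ≤ 1 := by nlinarith
    have hεk1 : k * ε < 1 := by nlinarith
    have hX0 : (0 : ℝ) < #(X 0) := by exact_mod_cast (hX 0).card_pos
    let bad : Fin k → Finset V := fun j =>
      {x ∈ X 0 | (#{y ∈ X j.succ | R 0 j.succ x y} : ℝ) < γ * #(X j.succ)}
    have hbad : ∀ j, (#(bad j) : ℝ) ≤ ε * #(X 0) := fun j =>
      ((hreg 0 j.succ (Fin.succ_pos j)).card_bad_lt hε hεle (hX 0) (hX _)).le
    have hcard : (#(univ.biUnion bad) : ℝ) < #(X 0) := by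
      calc (#(univ.biUnion bad) : ℝ) ≤ ∑ j, (#(bad j) : ℝ) := by
            exact_mod_cast card_biUnion_le
        _ ≤ ∑ _j : Fin k, ε * #(X 0) := sum_le_sum fun j _ => hbad j
        _ = k * ε * #(X 0) := by simp [mul_assoc]
        _ < #(X 0) := by nlinarith
    obtain ⟨x, hx, hxb⟩ : ∃ x ∈ X 0, x ∉ univ.biUnion bad := by
      by_contra! hcon
      have : #(X 0) ≤ #(univ.biUnion bad) := card_le_card hcon
      exact absurd hcard (not_lt.2 (by exact_mod_cast this))
    have hxj : ∀ j : Fin k, γ * #(X j.succ) ≤ (#{y ∈ X j.succ | R 0 j.succ x y} : ℝ) := by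
      intro j
      by_contra! hcon
      exact hxb (mem_biUnion.2 ⟨j, mem_univ _, mem_filter.2 ⟨hx, hcon⟩⟩)
    obtain ⟨z, hz, hzR⟩ := ih (ε / γ) (fun j => {y ∈ X j.succ | R 0 j.succ x y})
      (fun i j => R i.succ j.succ) (by positivity)
      (by
        rw [div_mul_eq_mul_div, div_le_iff₀ hγ, ← pow_succ]
        nlinarith)
      (fun j => by
        rw [← card_pos]
        have h1 : (0 : ℝ) < #(X j.succ) := by exact_mod_cast (hX j.succ).card_pos
        have : (0 : ℝ) < (#{y ∈ X j.succ | R 0 j.succ x y} : ℝ) :=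
          lt_of_lt_of_le (by positivity) (hxj j)
        exact_mod_cast this)
      (fun i j hij => (hreg i.succ j.succ (Fin.succ_lt_succ_iff.2 hij)).restrict hγ hε
        (filter_subset _ _) (filter_subset _ _) (hxj i) (hxj j))
    refine ⟨Fin.cons x z, ?_, ?_⟩
    · intro i
      refine Fin.cases ?_ (fun j => ?_) i
      · simpa using hx
      · simpa using (mem_filter.1 (hz j)).1
    · intro i j
      refine Fin.cases ?_ (fun i => ?_) i
      · refine Fin.cases ?_ (fun j => ?_) j
        · intro h; exact absurd h (lt_irrefl _)
        · intro _
          simpa using (mem_filter.1 (hz j)).2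
      · refine Fin.cases ?_ (fun j => ?_) j
        · intro h; exact absurd h (Fin.not_lt_zero _)
        · intro h
          simpa using hzR i j (Fin.succ_lt_succ_iff.1 h)

/-- Adjacency (`b = true`) or non-adjacency (`b = false`). -/
def AdjIs {V : Type} (G : SimpleGraph V) (b : Bool) (x y : V) : Prop := G.Adj x y ↔ b = true

lemma card_adjIs_true {V : Type} (G : SimpleGraph V) (A B : Finset V) :
    (#{x ∈ A ×ˢ B | AdjIs G true x.1 x.2} : ℝ) = (G.edgeDensity A B : ℝ) * (#A * #B) := by
  have h1 : (#{x ∈ A ×ˢ B | AdjIs G true x.1 x.2}) = #(G.interedges A B) := by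
    congr 1; ext x; simp [AdjIs, SimpleGraph.mem_interedges_iff, and_assoc]
  rw [h1, SimpleGraph.edgeDensity_def]
  push_cast
  rcases A.eq_empty_or_nonempty with rfl | hA
  · simp
  rcases B.eq_empty_or_nonempty with rfl | hB
  · simp [SimpleGraph.interedges, Rel.interedges]
  have : (#A : ℝ) ≠ 0 := by exact_mod_cast hA.card_ne_zero
  have : (#B : ℝ) ≠ 0 := by exact_mod_cast hB.card_ne_zero
  field_simp

lemma card_adjIs_false {V : Type} (G : SimpleGraph V) (A B : Finset V) :
    (#{x ∈ A ×ˢ B | AdjIs G false x.1 x.2} : ℝ) = (1 - (G.edgeDensity A B : ℝ)) * (#A * #B) := by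
  have h := card_filter_add_card_filter_not (s := A ×ˢ B) (fun x => AdjIs G true x.1 x.2)
  have h2 : #{x ∈ A ×ˢ B | AdjIs G false x.1 x.2} =
      #{x ∈ A ×ˢ B | ¬ AdjIs G true x.1 x.2} := by
    congr 1; ext x; simp [AdjIs]
  rw [h2]
  have h3 := card_adjIs_true G A B
  have h4 : (#(A ×ˢ B) : ℝ) = #A * #B := by rw [card_product]; push_cast; rfl
  have h5 : (#{x ∈ A ×ˢ B | AdjIs G true x.1 x.2} : ℝ) +
      #{x ∈ A ×ˢ B | ¬ AdjIs G true x.1 x.2} = #(A ×ˢ B) := by exact_mod_cast h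
  linarith

lemma lowReg_of_density {V : Type} (G : SimpleGraph V) (b : Bool) {ε γ : ℝ} {A B : Finset V}
    (h : ∀ A' ⊆ A, ∀ B' ⊆ B, ε * #A ≤ #A' → ε * #B ≤ #B' →
      (b = true → γ ≤ (G.edgeDensity A' B' : ℝ)) ∧
      (b = false → (G.edgeDensity A' B' : ℝ) ≤ 1 - γ)) :
    LowReg (AdjIs G b) ε γ A B := by
  intro A' hA' B' hB' h1 h2
  obtain ⟨h3, h4⟩ := h A' hA' B' hB' h1 h2
  cases b with
  | true => rw [card_adjIs_true]; gcongr; exact h3 rfl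
  | false => rw [card_adjIs_false]; gcongr; linarith [h4 rfl]

/-- Slicing: a uniform pair of intermediate density gives one-sided regularity in both relations
for large subsets. -/
lemma lowReg_of_uniform {V : Type} (G : SimpleGraph V) (b : Bool) {ε₀ ε₁ γ κ : ℝ}
    {A B W U : Finset V} (hu : G.IsUniform ε₀ A B) (hW : W ⊆ A) (hU : U ⊆ B)
    (hWA : κ * #A ≤ #W) (hUB : κ * #B ≤ #U) (hε₁ : 0 ≤ ε₁) (hκ : ε₀ ≤ ε₁ * κ)
    (hγ : ε₀ ≤ γ) (h1 : 2 * γ ≤ (G.edgeDensity A B : ℝ))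
    (h2 : (G.edgeDensity A B : ℝ) ≤ 1 - 2 * γ) :
    LowReg (AdjIs G b) ε₁ γ W U := by
  refine lowReg_of_density G b fun A' hA' B' hB' hA1 hB1 => ?_
  have key : ∀ a w c : ℝ, 0 ≤ a → κ * a ≤ w → ε₁ * w ≤ c → a * ε₀ ≤ c := by
    intro a w c ha h h'
    calc a * ε₀ ≤ a * (ε₁ * κ) := by gcongr
      _ = ε₁ * (κ * a) := by ring
      _ ≤ ε₁ * w := by gcongr
      _ ≤ c := h'
  have := hu (hA'.trans hW) (hB'.trans hU) (key _ _ _ (by positivity) hWA hA1)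
    (key _ _ _ (by positivity) hUB hB1)
  rw [abs_lt] at this
  exact ⟨fun _ => by linarith, fun _ => by linarith⟩

/-- Szemerédi's lemma inside `S`: there are two disjoint large subsets forming a uniform pair. -/
lemma exists_uniform_pair {ε : ℝ} (hε : 0 < ε) (hε1 : ε < 1) :
    ∃ L : ℕ, 0 < L ∧ ∀ (V : Type) (G : SimpleGraph V) (S : Finset V), L ≤ #S →
      ∃ W U, W ⊆ S ∧ U ⊆ S ∧ Disjoint W U ∧ (#S : ℝ) ≤ 2 * L * #W ∧ (#S : ℝ) ≤ 2 * L * #U ∧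
        G.IsUniform ε W U := by
  set L := max (SzemerediRegularity.bound ε 2) 2 with hL
  refine ⟨L, by omega, fun V G S hS => ?_⟩
  let e : S ↪ V := Function.Embedding.subtype _
  let H : SimpleGraph S := G.comap e
  obtain ⟨P, hPe, hP2, hPb, hPu⟩ := szemeredi_regularity (G := H) (l := 2) hε
    (by rw [Fintype.card_coe]; omega)
  have hPL : #P.parts ≤ L := by omega
  obtain ⟨w, hw, u, hu, hwu, huni⟩ : ∃ w ∈ P.parts, ∃ u ∈ P.parts, w ≠ u ∧ H.IsUniform ε w u := by
    by_contra! hcon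
    have : P.nonUniforms H ε = P.parts.offDiag := by
      ext ⟨a, b⟩
      simp only [Finpartition.mk_mem_nonUniforms, mem_offDiag]
      constructor
      · rintro ⟨h1, h2, h3, -⟩; exact ⟨h1, h2, h3⟩
      · rintro ⟨h1, h2, h3⟩; exact ⟨h1, h2, h3, hcon a h1 b h2 h3⟩
    rw [Finpartition.IsUniform, this, offDiag_card, ← Nat.mul_sub_one] at hPu
    have hpos : (0 : ℝ) < ((#P.parts * (#P.parts - 1) : ℕ) : ℝ) := by
      have : 0 < #P.parts * (#P.parts - 1) := Nat.mul_pos (by omega) (by omega)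
      exact_mod_cast this
    nlinarith
  have hsize : ∀ w ∈ P.parts, (#S : ℝ) ≤ 2 * L * #(w.map e) := by
    intro w hw
    have h1 := hPe.average_le_card_part hw
    rw [card_univ, Fintype.card_coe] at h1
    have h2 : #S < #P.parts * (#S / #P.parts + 1) := by
      have := Nat.div_add_mod #S #P.parts
      have := Nat.mod_lt #S (show #P.parts > 0 by omega)
      rw [mul_add]; omega
    have hw1 : 1 ≤ #w := (P.nonempty_of_mem_parts hw).card_pos
    rw [card_map]
    have : #S ≤ 2 * L * #w := by
      calc #S ≤ #P.parts * (#S / #P.parts + 1) := h2.le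
        _ ≤ L * (#w + #w) := by gcongr
        _ = _ := by ring
    exact_mod_cast this
  have hdens : ∀ a b : Finset S, H.edgeDensity a b = G.edgeDensity (a.map e) (b.map e) := by
    intro a b
    rw [SimpleGraph.edgeDensity_def, SimpleGraph.edgeDensity_def, card_map, card_map]
    congr 2
    rw [← card_map (e.prodMap e)]
    congr 1
    ext ⟨x, y⟩
    simp only [mem_map, SimpleGraph.mem_interedges_iff, Prod.exists,
      Function.Embedding.prodMap, Function.Embedding.coeFn_mk, Prod.map, Prod.mk.injEq]
    constructor
    · rintro ⟨x', y', ⟨h1, h2, h3⟩, rfl, rfl⟩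
      exact ⟨⟨x', h1, rfl⟩, ⟨y', h2, rfl⟩, h3⟩
    · rintro ⟨⟨x', h1, rfl⟩, ⟨y', h2, rfl⟩, h3⟩
      exact ⟨x', y', ⟨h1, h2, h3⟩, rfl, rfl⟩
  refine ⟨w.map e, u.map e, ?_, ?_, ?_, hsize w hw, hsize u hu, ?_⟩
  · intro x hx; obtain ⟨y, -, rfl⟩ := mem_map.1 hx; exact y.2
  · intro x hx; obtain ⟨y, -, rfl⟩ := mem_map.1 hx; exact y.2
  · exact (disjoint_map e).2 (P.disjoint hw hu hwu)
  · intro A hA B hB h1 h2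
    obtain ⟨A, hA', rfl⟩ := subset_map_iff.1 hA
    obtain ⟨B, hB', rfl⟩ := subset_map_iff.1 hB
    rw [← hdens, ← hdens]
    simp only [card_map] at h1 h2
    exact huni hA' hB' h1 h2

/-- A uniform pair is one-sidedly regular for one of the two relations, whichever is in majority. -/
lemma exists_lowReg_of_uniform {V : Type} (G : SimpleGraph V) {ε γ : ℝ} {A B : Finset V}
    (hu : G.IsUniform ε A B) (hε : ε ≤ 1 / 4) (hγ : γ ≤ 1 / 4) :
    ∃ b, LowReg (AdjIs G b) ε γ A B := by
  rcases le_total (1 / 2 : ℝ) (G.edgeDensity A B : ℝ) with h | h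
  · refine ⟨true, lowReg_of_density G _ fun A' hA' B' hB' h1 h2 => ?_⟩
    have := hu hA' hB' (by linarith) (by linarith)
    rw [abs_lt] at this
    exact ⟨fun _ => by linarith, fun h => absurd h (by decide)⟩
  · refine ⟨false, lowReg_of_density G _ fun A' hA' B' hB' h1 h2 => ?_⟩
    have := hu hA' hB' (by linarith) (by linarith)
    rw [abs_lt] at this
    exact ⟨fun h => absurd h (by decide), fun _ => by linarith⟩

/-- The vertices of `C₅` can be numbered so that the adjacencies of the first two and of the next two
take any two prescribed values. -/
lemma cycle_labelling : ∀ b₁ b₂ : Bool, ∃ σ : Equiv.Perm (Fin 5),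
    decide ((cycleGraph 5).Adj (σ 0) (σ 1)) = b₁ ∧ decide ((cycleGraph 5).Adj (σ 2) (σ 3)) = b₂ := by
  have h : ∀ b₁ b₂ : Bool, ∃ σ : Equiv.Perm (Fin 5),
    decide (σ 0 - σ 1 = 1 ∨ σ 1 - σ 0 = 1) = b₁ ∧
      decide (σ 2 - σ 3 = 1 ∨ σ 3 - σ 2 = 1) = b₂ := by decide +kernel
  intro b₁ b₂
  obtain ⟨σ, h1, h2⟩ := h b₁ b₂
  refine ⟨σ, ?_, ?_⟩
  · rw [← h1]; congr 1
  · rw [← h2]; congr 1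

/-- Two of the three classes are replaced by uniform pairs of subsets of them. The adjacency in majority
inside each such pair is prescribed, and since the other pairs of the five sets allow both
adjacencies, `C₅` can be embedded with one vertex in each of them. -/
theorem grey_triangle {γ : ℝ} (hγ : 0 < γ) (hγ1 : γ ≤ 1 / 4) :
    ∃ ε₀ : ℝ, 0 < ε₀ ∧ ∃ n₀ : ℕ, 0 < n₀ ∧ ∀ (V : Type) (G : SimpleGraph V) (X : Fin 3 → Finset V),
      (∀ i, n₀ ≤ #(X i)) → (∀ i j, i < j → Disjoint (X i) (X j)) →
      (∀ i j, i < j → G.IsUniform ε₀ (X i) (X j)) →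
      (∀ i j, i < j → 2 * γ ≤ (G.edgeDensity (X i) (X j) : ℝ)) →
      (∀ i j, i < j → (G.edgeDensity (X i) (X j) : ℝ) ≤ 1 - 2 * γ) → HasInducedC5 G := by
  set ε₁ : ℝ := γ ^ 5 / 5 with hε₁
  have hp : γ ^ 5 ≤ γ := pow_le_of_le_one hγ.le (by linarith) (by norm_num)
  have hε₁0 : 0 < ε₁ := by positivity
  obtain ⟨L, hL, hpair⟩ := exists_uniform_pair (ε := ε₁) hε₁0 (by linarith)
  have hL' : (1 : ℝ) ≤ L := by exact_mod_cast hL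
  set κ : ℝ := 1 / (2 * L) with hκ
  have hκ0 : 0 < κ := by positivity
  have hκ1 : κ ≤ 1 := by rw [hκ, div_le_one (by positivity)]; linarith
  refine ⟨ε₁ * κ, by positivity, L, hL, fun V G X hXn hXd hXu hXl hXh => ?_⟩
  obtain ⟨W₀, W₁, h0s, h1s, h01, h0c, h1c, h01u⟩ := hpair V G (X 0) (hXn 0)
  obtain ⟨W₂, W₃, h2s, h3s, h23, h2c, h3c, h23u⟩ := hpair V G (X 1) (hXn 1)
  have hlarge : ∀ a w : ℝ, a ≤ 2 * L * w → κ * a ≤ w := by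
    intro a w h
    rw [hκ, one_div, inv_mul_le_iff₀ (by positivity)]; exact h
  obtain ⟨b₁, hb₁⟩ := exists_lowReg_of_uniform G h01u (by linarith) hγ1
  obtain ⟨b₂, hb₂⟩ := exists_lowReg_of_uniform G h23u (by linarith) hγ1
  obtain ⟨σ, hσ₁, hσ₂⟩ := cycle_labelling b₁ b₂
  let Y : Fin 5 → Finset V := ![W₀, W₁, W₂, W₃, X 2]
  let q : Fin 5 → Fin 3 := ![0, 0, 1, 1, 2]
  have hYs : ∀ i, Y i ⊆ X (q i) := by
    intro i; fin_cases i
    exacts [h0s, h1s, h2s, h3s, subset_rfl]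
  have hYc : ∀ i, κ * #(X (q i)) ≤ (#(Y i) : ℝ) := by
    intro i; fin_cases i
    · exact hlarge _ _ h0c
    · exact hlarge _ _ h1c
    · exact hlarge _ _ h2c
    · exact hlarge _ _ h3c
    · have : (0 : ℝ) ≤ #(X 2) := by positivity
      show κ * (#(X 2) : ℝ) ≤ #(X 2)
      nlinarith
  have hYne : ∀ i, (Y i).Nonempty := by
    intro i
    rw [← card_pos]
    have h1 : (0 : ℝ) < #(X (q i)) := by
      have := hXn (q i)
      exact_mod_cast (lt_of_lt_of_le hL this)
    have : (0 : ℝ) < #(Y i) := lt_of_lt_of_le (by positivity) (hYc i)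
    exact_mod_cast this
  have hq : ∀ i j : Fin 5, i < j → q i < q j ∨ (i = 0 ∧ j = 1) ∨ (i = 2 ∧ j = 3) := by decide
  have hYd : ∀ i j, i < j → Disjoint (Y i) (Y j) := by
    intro i j hij
    rcases hq i j hij with h | ⟨rfl, rfl⟩ | ⟨rfl, rfl⟩
    · exact disjoint_of_subset_left (hYs i) (disjoint_of_subset_right (hYs j) (hXd _ _ h))
    · exact h01
    · exact h23
  obtain ⟨x, hx, hxR⟩ := LowReg.embed hγ (by linarith) 5 ε₁ Y
    (fun i j => AdjIs G (decide ((cycleGraph 5).Adj (σ i) (σ j)))) hε₁0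
    (by rw [hε₁]; push_cast; linarith) hYne
    (by
      intro i j hij
      rcases hq i j hij with h | ⟨rfl, rfl⟩ | ⟨rfl, rfl⟩
      · exact lowReg_of_uniform G _ (hXu _ _ h) (hYs i) (hYs j) (hYc i) (hYc j) hε₁0.le le_rfl
          (by nlinarith) (hXl _ _ h) (hXh _ _ h)
      · rw [hσ₁]; exact hb₁
      · rw [hσ₂]; exact hb₂)
  have hinj : Function.Injective x := by
    intro i j hij
    by_contra hne
    rcases lt_or_gt_of_ne hne with h | h
    · exact disjoint_left.1 (hYd i j h) (hx i) (hij ▸ hx j)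
    · exact disjoint_left.1 (hYd j i h) (hx j) (hij ▸ hx i)
  have hadj : ∀ i j, i < j → (G.Adj (x i) (x j) ↔ (cycleGraph 5).Adj (σ i) (σ j)) := by
    intro i j hij
    have := hxR i j hij
    simpa [AdjIs] using this
  have hadj' : ∀ i j, (G.Adj (x i) (x j) ↔ (cycleGraph 5).Adj (σ i) (σ j)) := by
    intro i j
    rcases lt_trichotomy i j with h | rfl | h
    · exact hadj i j h
    · simp
    · rw [G.adj_comm, hadj j i h, SimpleGraph.adj_comm]
  refine ⟨⟨⟨fun i => x (σ.symm i), hinj.comp σ.symm.injective⟩, ?_⟩⟩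
  intro a b
  simp [hadj']

/-! ### Independent blocks in a Bernoulli random set -/

/-- The probability of the outcome `S` when each element of `E` is kept independently with
probability `p`. -/
noncomputable def bernWt {ι : Type} (p : ℝ) (E S : Finset ι) : ℝ := p ^ #S * (1 - p) ^ (#E - #S)

lemma bernWt_nonneg {ι : Type} {p : ℝ} (hp0 : 0 ≤ p) (hp1 : p ≤ 1) (E S : Finset ι) :
    0 ≤ bernWt p E S :=
  mul_nonneg (pow_nonneg hp0 _) (pow_nonneg (by linarith) _)

lemma sum_bernWt {ι : Type} (p : ℝ) (E : Finset ι) : ∑ S ∈ E.powerset, bernWt p E S = 1 := by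
  simp only [bernWt]
  rw [Finset.sum_pow_mul_eq_add_pow]
  simp

lemma bernWt_union {ι : Type} (p : ℝ) {E₁ E₂ S₁ S₂ : Finset ι} (h : Disjoint E₁ E₂)
    (h₁ : S₁ ⊆ E₁) (h₂ : S₂ ⊆ E₂) :
    bernWt p (E₁ ∪ E₂) (S₁ ∪ S₂) = bernWt p E₁ S₁ * bernWt p E₂ S₂ := by
  have hS : Disjoint S₁ S₂ := disjoint_of_subset_left h₁ (disjoint_of_subset_right h₂ h)
  have c₁ := card_le_card h₁
  have c₂ := card_le_card h₂
  rw [bernWt, bernWt, bernWt, card_union_of_disjoint h, card_union_of_disjoint hS,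
    show #E₁ + #E₂ - (#S₁ + #S₂) = (#E₁ - #S₁) + (#E₂ - #S₂) by omega, pow_add, pow_add]
  ring

/-- Independence of events on disjoint sets of coordinates. -/
lemma sum_bernWt_union {ι : Type} (p : ℝ) {E₁ E₂ : Finset ι} (h : Disjoint E₁ E₂)
    (Q₁ Q₂ : Finset ι → Prop) :
    ∑ S ∈ (E₁ ∪ E₂).powerset with Q₁ (S ∩ E₁) ∧ Q₂ (S ∩ E₂), bernWt p (E₁ ∪ E₂) S =
      (∑ S ∈ E₁.powerset with Q₁ S, bernWt p E₁ S) *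
        ∑ S ∈ E₂.powerset with Q₂ S, bernWt p E₂ S := by
  rw [sum_mul_sum, ← sum_product']
  have e1 : ∀ S₁ S₂ : Finset ι, S₁ ⊆ E₁ → S₂ ⊆ E₂ → (S₁ ∪ S₂) ∩ E₁ = S₁ := by
    intro S₁ S₂ h₁ h₂
    rw [union_inter_distrib_right, inter_eq_left.2 h₁,
      disjoint_iff_inter_eq_empty.1 (disjoint_of_subset_left h₂ h.symm), union_empty]
  have e2 : ∀ S₁ S₂ : Finset ι, S₁ ⊆ E₁ → S₂ ⊆ E₂ → (S₁ ∪ S₂) ∩ E₂ = S₂ := by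
    intro S₁ S₂ h₁ h₂
    rw [union_inter_distrib_right, inter_eq_left.2 h₂,
      disjoint_iff_inter_eq_empty.1 (disjoint_of_subset_left h₁ h), empty_union]
  refine sum_bij' (fun S _ => (S ∩ E₁, S ∩ E₂)) (fun T _ => T.1 ∪ T.2) ?_ ?_ ?_ ?_ ?_
  · intro S hS
    simp only [mem_filter, mem_powerset, mem_product] at hS ⊢
    exact ⟨⟨inter_subset_right, hS.2.1⟩, inter_subset_right, hS.2.2⟩
  · rintro ⟨S₁, S₂⟩ hS
    simp only [mem_filter, mem_powerset, mem_product] at hS ⊢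
    rw [e1 _ _ hS.1.1 hS.2.1, e2 _ _ hS.1.1 hS.2.1]
    exact ⟨union_subset_union hS.1.1 hS.2.1, hS.1.2, hS.2.2⟩
  · intro S hS
    simp only [mem_filter, mem_powerset] at hS
    simp only
    rw [← inter_union_distrib_left, inter_eq_left.2 hS.1]
  · rintro ⟨S₁, S₂⟩ hS
    simp only [mem_filter, mem_powerset, mem_product] at hS
    simp only [e1 _ _ hS.1.1 hS.2.1, e2 _ _ hS.1.1 hS.2.1]
  · intro S hS
    simp only [mem_filter, mem_powerset] at hS
    simp only
    rw [← bernWt_union p h inter_subset_right inter_subset_right, ← inter_union_distrib_left,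
      inter_eq_left.2 hS.1]

/-- Independent blocks: avoiding a prescribed outcome on each of disjoint blocks. -/
theorem sum_avoid_le {ι κ : Type} {p : ℝ} (hp0 : 0 < p) (hp : p ≤ 1 / 2)
    (B π : κ → Finset ι) (K : Finset κ) :
    ∀ E : Finset ι, (∀ k ∈ K, B k ⊆ E) → (∀ k ∈ K, π k ⊆ B k) →
      (∀ k ∈ K, ∀ l ∈ K, k ≠ l → Disjoint (B k) (B l)) →
      ∑ S ∈ E.powerset with (∀ k ∈ K, S ∩ B k ≠ π k), bernWt p E S ≤
        ∏ k ∈ K, (1 - p ^ #(B k)) := by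
  induction K using Finset.induction_on with
  | empty => intro E _ _ _; simp [sum_bernWt]
  | insert k K hk ih =>
    intro E hB hπ hd
    rw [prod_insert hk]
    have hkB := hB k (mem_insert_self _ _)
    set E' := E \ B k with hE'
    have hdisj : Disjoint (B k) E' := disjoint_sdiff
    have hE : B k ∪ E' = E := union_sdiff_of_subset hkB
    have hsub : ∀ l ∈ K, B l ⊆ E' := by
      intro l hl
      refine subset_sdiff.2 ⟨hB l (mem_insert_of_mem hl), ?_⟩
      exact hd l (mem_insert_of_mem hl) k (mem_insert_self _ _) (fun h => hk (h ▸ hl))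
    have hih := ih E' hsub (fun l hl => hπ l (mem_insert_of_mem hl))
      (fun l hl m hm => hd l (mem_insert_of_mem hl) m (mem_insert_of_mem hm))
    have hfac := sum_bernWt_union p hdisj (fun S => S ≠ π k) (fun S => ∀ l ∈ K, S ∩ B l ≠ π l)
    have hset : (E.powerset.filter fun S => ∀ l ∈ insert k K, S ∩ B l ≠ π l) =
        ((B k ∪ E').powerset.filter fun S => S ∩ B k ≠ π k ∧ ∀ l ∈ K, (S ∩ E') ∩ B l ≠ π l) := by
      rw [hE]
      refine filter_congr fun S _ => ?_
      rw [forall_mem_insert]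
      refine and_congr Iff.rfl (forall₂_congr fun l hl => ?_)
      rw [inter_assoc, inter_eq_right.2 (hsub l hl)]
    have hone : ∑ S ∈ (B k).powerset with S ≠ π k, bernWt p (B k) S ≤ 1 - p ^ #(B k) := by
      have hmem : π k ∈ (B k).powerset := mem_powerset.2 (hπ k (mem_insert_self _ _))
      rw [filter_ne', ← sum_bernWt p (B k), ← sum_erase_add _ _ hmem]
      have : p ^ #(B k) ≤ bernWt p (B k) (π k) := by
        have hc := card_le_card (mem_powerset.1 hmem)
        rw [bernWt]
        calc p ^ #(B k) = p ^ #(π k) * p ^ (#(B k) - #(π k)) := by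
              rw [← pow_add]; congr 1; omega
          _ ≤ _ := by gcongr; linarith
      linarith
    rw [hset]
    have hfac' : ∑ S ∈ (B k ∪ E').powerset with
        (S ∩ B k ≠ π k ∧ ∀ l ∈ K, (S ∩ E') ∩ B l ≠ π l), bernWt p (B k ∪ E') S ≤
        (1 - p ^ #(B k)) * ∏ k ∈ K, (1 - p ^ #(B k)) := by
      refine (Eq.trans_le (by convert hfac) (mul_le_mul
        (Eq.trans_le (by congr) hone) (Eq.trans_le (by congr) hih) ?_ ?_))
      · exact sum_nonneg fun S _ => bernWt_nonneg hp0.le (by linarith) _ _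
      · have := pow_le_one₀ (n := #(B k)) hp0.le (by linarith)
        linarith
    rw [hE] at hfac' ⊢
    exact hfac'

/-! ### Disjoint triples and pairs in a graph with small homogeneous sets -/

/-- If every subset with at least `h` elements contains a tuple with property `T`, disjoint ones can be
picked greedily. -/
lemma exists_disjoint_tuples {V : Type} {k : ℕ} (T : (Fin k → V) → Prop) (S : Finset V) (h : ℕ)
    (hT : ∀ S' ⊆ S, h ≤ #S' → ∃ f : Fin k → V, Function.Injective f ∧ (∀ u, f u ∈ S') ∧ T f)
    (t : ℕ) (ht : k * t + h ≤ #S) :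
    ∃ f : Fin t → Fin k → V, Function.Injective (fun x : Fin t × Fin k => f x.1 x.2) ∧
      (∀ a u, f a u ∈ S) ∧ ∀ a, T (f a) := by
  induction t with
  | zero => exact ⟨fun a => a.elim0, fun x => x.1.elim0, fun a => a.elim0, fun a => a.elim0⟩
  | succ t ih =>
    obtain ⟨f, hf, hfS, hfT⟩ := ih (by rw [mul_add] at ht; omega)
    set I : Finset V := univ.image (fun x : Fin t × Fin k => f x.1 x.2) with hI
    have hIc : #I = t * k := by rw [hI, card_image_of_injective _ hf]; simp
    have hc : #S - #I ≤ #(S \ I) := le_card_sdiff I S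
    obtain ⟨g, hg, hgS, hgT⟩ := hT (S \ I) sdiff_subset
      (by rw [mul_add] at ht; rw [mul_comm] at hIc; omega)
    have hgf : ∀ a u v, g u ≠ f a v := by
      intro a u v h
      have := (mem_sdiff.1 (hgS u)).2
      exact this (mem_image.2 ⟨(a, v), mem_univ _, h.symm⟩)
    refine ⟨Fin.cons g f, ?_, ?_, ?_⟩
    · rintro ⟨a, u⟩ ⟨b, v⟩ hab
      simp only at hab
      induction a using Fin.cases with
      | zero =>
        induction b using Fin.cases with
        | zero => simp only [Fin.cons_zero] at hab; rw [hg hab]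
        | succ b => simp only [Fin.cons_zero, Fin.cons_succ] at hab; exact absurd hab (hgf _ _ _)
      | succ a =>
        induction b using Fin.cases with
        | zero =>
          simp only [Fin.cons_zero, Fin.cons_succ] at hab; exact absurd hab.symm (hgf _ _ _)
        | succ b =>
          simp only [Fin.cons_succ] at hab
          have := @hf (a, u) (b, v) hab
          simp only [Prod.mk.injEq] at this
          rw [this.1, this.2]
    · intro a u
      induction a using Fin.cases with
      | zero => simpa using (mem_sdiff.1 (hgS u)).1
      | succ a => simpa using hfS a u
    · intro a
      induction a using Fin.cases with
      | zero => simpa using hgT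
      | succ a => simpa using hfT a

/-- `f` lists an induced path on three vertices in `G` (`b = true`) or in its complement
(`b = false`), with middle vertex `f 1`. -/
def IsPath3 {V : Type} (G : SimpleGraph V) (b : Bool) (f : Fin 3 → V) : Prop :=
  AdjIs G b (f 0) (f 1) ∧ AdjIs G b (f 1) (f 2) ∧ AdjIs G (!b) (f 0) (f 2)

/-- In a set that is neither a clique nor independent some vertex has both a neighbour and a
non-neighbour. -/
lemma exists_path3 {V : Type} (G : SimpleGraph V) (S : Finset V) (h1 : ¬ G.IsClique ↑S)
    (h2 : ¬ Gᶜ.IsClique ↑S) :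
    ∃ f : Fin 3 → V, Function.Injective f ∧ (∀ u, f u ∈ S) ∧ ∃ b, IsPath3 G b f := by
  simp only [SimpleGraph.isClique_iff, Set.Pairwise, SimpleGraph.compl_adj, not_forall,
    mem_coe, not_and, not_not] at h1 h2
  obtain ⟨x, hx, y, hy, hxy, hnxy⟩ := h1
  obtain ⟨u, hu, v, hv, huv, huv'⟩ := h2
  have huv' := huv' huv
  obtain ⟨a, b, c, ha, hb, hc, hbc, hab, hac, hac'⟩ : ∃ a b c, a ∈ S ∧ b ∈ S ∧ c ∈ S ∧ b ≠ c ∧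
      G.Adj a b ∧ ¬ G.Adj a c ∧ a ≠ c := by
    by_cases hxu : x = u
    · subst hxu
      exact ⟨x, v, y, hx, hv, hy, fun h => hnxy (h ▸ huv'), huv', hnxy, hxy⟩
    by_cases hxu' : G.Adj x u
    · exact ⟨x, u, y, hx, hu, hy, fun h => hnxy (h ▸ hxu'), hxu', hnxy, hxy⟩
    · exact ⟨u, v, x, hu, hv, hx, fun h => hxu' (h ▸ huv').symm, huv', fun h => hxu' h.symm,
        fun h => hxu h.symm⟩
  have inj : ∀ p q r : V, p ≠ q → p ≠ r → q ≠ r → Function.Injective ![p, q, r] := by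
    intro p q r h1 h2 h3 i j hij
    fin_cases i <;> fin_cases j <;> simp_all
  by_cases hbc' : G.Adj b c
  · refine ⟨![a, b, c], inj _ _ _ hab.ne hac' hbc, ?_, true, ?_⟩
    · intro u; fin_cases u <;> simp [ha, hb, hc]
    · simp [IsPath3, AdjIs, hab, hac, hbc']
  · refine ⟨![a, c, b], inj _ _ _ hac' hab.ne hbc.symm, ?_, false, ?_⟩
    · intro u; fin_cases u <;> simp [ha, hb, hc]
    · simp [IsPath3, AdjIs, hab, hac, hbc', G.adj_comm c b]

/-- Among `2 t` disjoint triples, `t` are of the same kind. -/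
lemma exists_paths {V : Type} (G : SimpleGraph V) (S : Finset V) (h t : ℕ)
    (hS : ∀ S' ⊆ S, h ≤ #S' → ¬ G.IsClique ↑S' ∧ ¬ Gᶜ.IsClique ↑S')
    (ht : 6 * t + h ≤ #S) :
    ∃ b, ∃ f : Fin t → Fin 3 → V, Function.Injective (fun x : Fin t × Fin 3 => f x.1 x.2) ∧
      (∀ a u, f a u ∈ S) ∧ ∀ a, IsPath3 G b (f a) := by
  obtain ⟨f, hf, hfS, hfT⟩ := exists_disjoint_tuples (fun f => ∃ b, IsPath3 G b f) S h
    (fun S' hS' hh => exists_path3 G S' (hS S' hS' hh).1 (hS S' hS' hh).2) (2 * t) (by omega)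
  choose b hb using hfT
  obtain ⟨c, hc⟩ : ∃ c, t ≤ #{a | b a = c} := by
    by_contra! hcon
    have h0 := hcon true
    have h1 := hcon false
    have h2 := card_filter_add_card_filter_not (s := (univ : Finset (Fin (2 * t))))
      (fun a => b a = true)
    simp only [Bool.not_eq_true, card_univ, Fintype.card_fin] at h2
    omega
  obtain ⟨T, hT, hTc⟩ := exists_subset_card_eq hc
  let e := T.equivFinOfCardEq hTc
  refine ⟨c, fun a => f (e.symm a), ?_, fun a u => hfS _ _, fun a => ?_⟩
  · rintro ⟨a, u⟩ ⟨a', u'⟩ h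
    have := @hf ((e.symm a : Fin (2 * t)), u) ((e.symm a' : Fin (2 * t)), u') h
    simp only [Prod.mk.injEq] at this
    have h3 : e.symm a = e.symm a' := Subtype.ext this.1
    rw [e.symm.injective h3, this.2]
  · have := hb (e.symm a)
    rwa [(mem_filter.1 (hT (e.symm a).2)).2] at this

lemma exists_pairs {V : Type} (G : SimpleGraph V) (b : Bool) (S : Finset V) (h t : ℕ)
    (hS : ∀ S' ⊆ S, h ≤ #S' → ¬ G.IsClique ↑S' ∧ ¬ Gᶜ.IsClique ↑S')
    (ht : 2 * t + h ≤ #S) :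
    ∃ f : Fin t → Fin 2 → V, Function.Injective (fun x : Fin t × Fin 2 => f x.1 x.2) ∧
      (∀ a u, f a u ∈ S) ∧ ∀ a, AdjIs G b (f a 0) (f a 1) := by
  refine exists_disjoint_tuples (fun f => AdjIs G b (f 0) (f 1)) S h ?_ t ht
  intro S' hS' hh
  obtain ⟨h1, h2⟩ := hS S' hS' hh
  simp only [SimpleGraph.isClique_iff, Set.Pairwise, SimpleGraph.compl_adj, not_forall,
    mem_coe, not_and, not_not] at h1 h2
  have inj : ∀ p q : V, p ≠ q → Function.Injective ![p, q] := by
    intro p q h1 i j hij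
    fin_cases i <;> fin_cases j <;> simp_all
  cases b with
  | false =>
    obtain ⟨x, hx, y, hy, hxy, hn⟩ := h1
    refine ⟨![x, y], inj _ _ hxy, ?_, by simp [AdjIs, hn]⟩
    intro u; fin_cases u <;> simp [hx, hy]
  | true =>
    obtain ⟨x, hx, y, hy, hxy, hn⟩ := h2
    refine ⟨![x, y], inj _ _ hxy, ?_, by simp [AdjIs, hn hxy]⟩
    intro u; fin_cases u <;> simp [hx, hy]

/-- The adjacencies between a path `f` and a pair `g` that complete an induced `C₅`. -/
def crossPat (b : Bool) (u : Fin 3) (v : Fin 2) : Bool :=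
  if (u = 2 ∧ v = 0) ∨ (u = 0 ∧ v = 1) then b else !b

/-- For `b = true` the path `f 0, f 1, f 2` closes up through `g 0, g 1` to a five-cycle; for
`b = false` the same holds in the complement. -/
lemma hasInducedC5_of_cross {V : Type} {G : SimpleGraph V} {b : Bool} {f : Fin 3 → V}
    {g : Fin 2 → V} (hf : Function.Injective f) (hg : Function.Injective g)
    (hfg : ∀ u v, f u ≠ g v) (hfP : IsPath3 G b f) (hgP : AdjIs G b (g 0) (g 1))
    (hc : ∀ u v, AdjIs G (crossPat b u v) (f u) (g v)) : HasInducedC5 G := by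
  obtain ⟨h1, h2, h3⟩ := hfP
  have f01 : f 0 ≠ f 1 := hf.ne (by decide)
  have f02 : f 0 ≠ f 2 := hf.ne (by decide)
  have f12 : f 1 ≠ f 2 := hf.ne (by decide)
  have g01 : g 0 ≠ g 1 := hg.ne (by decide)
  have c00 := hc 0 0
  have c01 := hc 0 1
  have c10 := hc 1 0
  have c11 := hc 1 1
  have c20 := hc 2 0
  have c21 := hc 2 1
  have build : ∀ x : Fin 5 → V, Function.Injective x →
      (∀ i j : Fin 5, i < j → (G.Adj (x i) (x j) ↔ (cycleGraph 5).Adj i j)) → HasInducedC5 G := by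
    intro x hx h
    refine ⟨⟨⟨x, hx⟩, ?_⟩⟩
    intro i j
    simp only [Function.Embedding.coeFn_mk]
    rcases lt_trichotomy i j with hij | rfl | hij
    · exact h i j hij
    · simp
    · rw [G.adj_comm, h j i hij, SimpleGraph.adj_comm]
  have d : ∀ i j : Fin 5, (cycleGraph 5).Adj i j ↔ (i - j = 1 ∨ j - i = 1) := by
    intro i j; rw [cycleGraph_adj]
  have hinj : ∀ a₀ a₁ a₂ a₃ a₄ : V, a₀ ≠ a₁ → a₀ ≠ a₂ → a₀ ≠ a₃ → a₀ ≠ a₄ → a₁ ≠ a₂ → a₁ ≠ a₃ →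
      a₁ ≠ a₄ → a₂ ≠ a₃ → a₂ ≠ a₄ → a₃ ≠ a₄ → Function.Injective ![a₀, a₁, a₂, a₃, a₄] := by
    intro a₀ a₁ a₂ a₃ a₄ _ _ _ _ _ _ _ _ _ _ i j hij
    fin_cases i <;> fin_cases j <;> simp_all
  cases b with
  | true =>
    simp [AdjIs, crossPat] at h1 h2 h3 hgP c00 c01 c10 c11 c20 c21
    -- the cycle `f 0, f 1, f 2, g 0, g 1`
    refine build ![f 0, f 1, f 2, g 0, g 1] (hinj _ _ _ _ _ f01 f02 (hfg _ _) (hfg _ _) f12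
      (hfg _ _) (hfg _ _) (hfg _ _) (hfg _ _) g01) ?_
    intro i j hij
    rw [d]
    fin_cases i <;> fin_cases j <;> first | (exfalso; revert hij; decide) | simp [*] <;> decide
  | false =>
    simp [AdjIs, crossPat] at h1 h2 h3 hgP c00 c01 c10 c11 c20 c21
    -- the cycle `f 0, f 2, g 1, f 1, g 0`
    refine build ![f 0, f 2, g 1, f 1, g 0] (hinj _ _ _ _ _ f02 (hfg _ _) f01 (hfg _ _) (hfg _ _)
      f12.symm (hfg _ _) (hfg _ _).symm g01.symm (hfg _ _)) ?_
    have h2' : ¬ G.Adj (f 2) (f 1) := fun h => h2 h.symm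
    have c11' := c11.symm
    have hgP' : ¬ G.Adj (g 1) (g 0) := fun h => hgP h.symm
    intro i j hij
    rw [d]
    fin_cases i <;> fin_cases j <;> first | (exfalso; revert hij; decide) | simp [*] <;> decide

lemma card_le_homNum {V : Type} [Fintype V] (G : SimpleGraph V) (S : Finset V)
    (h : G.IsClique ↑S ∨ Gᶜ.IsClique ↑S) : #S ≤ homNum G := by
  refine le_csSup ⟨Fintype.card V, ?_⟩ ⟨S, rfl, h⟩
  rintro m ⟨s, rfl, -⟩
  exact card_le_univ s

/-! ### Regularity partitions and certificates -/

/-- Szemerédi's regularity lemma with the parts given by a colouring of the vertices and numbered. -/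
lemma regularity_indexed {ε : ℝ} (hε : 0 < ε) (l : ℕ) :
    ∃ L : ℕ, ∀ n : ℕ, l ≤ n → ∀ G : SimpleGraph (Fin n), ∃ M, l ≤ M ∧ M ≤ L ∧
      ∃ col : Fin n → Fin M, (∀ i, n / M ≤ #{x | col x = i}) ∧
        (#{q : Fin M × Fin M | q.1 < q.2 ∧
          ¬ G.IsUniform ε {x | col x = q.1} {x | col x = q.2}} : ℝ) ≤ ε * M ^ 2 := by
  refine ⟨SzemerediRegularity.bound ε l, fun n hn G => ?_⟩
  obtain ⟨P, hPe, hPl, hPb, hPu⟩ := szemeredi_regularity (G := G) (l := l) hε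
    (by rwa [Fintype.card_fin])
  let e := P.parts.equivFin
  let col : Fin n → Fin #P.parts := fun x => e ⟨P.part x, P.part_mem.2 (mem_univ x)⟩
  have hcol : ∀ i, ({x | col x = i} : Finset (Fin n)) = (e.symm i : Finset (Fin n)) := by
    intro i
    ext x
    simp only [mem_filter, mem_univ, true_and]
    constructor
    · intro h
      rw [← h]
      simp [col, P.mem_part (mem_univ x)]
    · intro h
      have : P.part x = (e.symm i : Finset (Fin n)) :=
        P.part_eq_of_mem (e.symm i).2 h
      simp only [col]
      rw [← Equiv.eq_symm_apply]
      exact Subtype.ext this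
  refine ⟨#P.parts, hPl, hPb, col, ?_, ?_⟩
  · intro i
    rw [hcol]
    simpa using hPe.average_le_card_part (e.symm i).2
  · simp only [hcol]
    have h1 : #{q : Fin #P.parts × Fin #P.parts | q.1 < q.2 ∧
        ¬ G.IsUniform ε (e.symm q.1 : Finset (Fin n)) (e.symm q.2 : Finset (Fin n))} ≤
        #(P.nonUniforms G ε) := by
      refine card_le_card_of_injOn
        (fun q => ((e.symm q.1 : Finset (Fin n)), (e.symm q.2 : Finset (Fin n)))) ?_ ?_
      · intro q hq
        simp only [coe_filter, mem_univ, true_and, Set.mem_ofPred_eq] at hq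
        simp only [mem_coe, Finpartition.mk_mem_nonUniforms]
        refine ⟨(e.symm q.1).2, (e.symm q.2).2, ?_, hq.2⟩
        intro h
        exact hq.1.ne (e.symm.injective (Subtype.ext h))
      · intro q _ r _ h
        simp only [Prod.mk.injEq] at h
        exact Prod.ext (e.symm.injective (Subtype.ext h.1)) (e.symm.injective (Subtype.ext h.2))
    rw [Finpartition.IsUniform] at hPu
    calc _ ≤ (#(P.nonUniforms G ε) : ℝ) := by exact_mod_cast h1
      _ ≤ _ := hPu
      _ ≤ ((#P.parts ^ 2 : ℕ) : ℝ) * ε := by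
          gcongr; rw [sq]; exact Nat.mul_le_mul_left _ (Nat.sub_le _ _)
      _ = _ := by push_cast; ring

/-- A certificate: the combinatorial data extracted from a graph on `n` vertices with a regularity
partition into `M` classes. A vertex pair belongs to
the class pair formed by the classes of its members, in this order. -/
structure Cert (n M t K : ℕ) where
  /-- the class of a vertex -/
  col : Fin n → Fin M
  /-- the pairs of classes of density close to `0` or `1` -/
  fx : Finset (Fin M × Fin M)
  /-- the grey pairs of classes -/
  gr : Finset (Fin M × Fin M)
  /-- contains those pairs in `fx` whose density is close to `1` -/
  vl : Finset (Fin M × Fin M)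
  /-- the vertex pairs whose adjacency is not the one predicted by `vl` -/
  dev : {D : Finset (Fin n × Fin n) // #D ≤ K}
  /-- the kind of the triples in a class: paths (`true`) or complements of paths -/
  ty : Fin M → Bool
  /-- disjoint triples inside each class, `t` of them -/
  pa : Fin M → Fin t → Fin 3 → Fin n
  /-- for each class, `t` disjoint edges (`true`) and `t` disjoint non-edges (`false`) -/
  pr : Fin M → Bool → Fin t → Fin 2 → Fin n

/-- The properties of a certificate that do not refer to the graph. `turan` bounds the number of grey
pairs and `total` says that at most `ε M²` pairs of classes are neither in `fx` nor grey. -/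
structure Cert.Valid {n M t K : ℕ} (σ : Cert n M t K) (ε : ℝ) : Prop where
  size : ∀ i, n / M ≤ #{x | σ.col x = i}
  fx_lt : ∀ q ∈ σ.fx, q.1 < q.2
  gr_lt : ∀ q ∈ σ.gr, q.1 < q.2
  disj : Disjoint σ.fx σ.gr
  turan : 4 * #σ.gr ≤ M ^ 2
  total : (M : ℝ) * (M - 1) / 2 ≤ #σ.fx + #σ.gr + ε * M ^ 2
  pa_col : ∀ i a u, σ.col (σ.pa i a u) = i
  pr_col : ∀ i b a u, σ.col (σ.pr i b a u) = i
  pa_inj : ∀ i, Function.Injective (fun x : Fin t × Fin 3 => σ.pa i x.1 x.2)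
  pr_inj : ∀ i b, Function.Injective (fun x : Fin t × Fin 2 => σ.pr i b x.1 x.2)

/-- The edge set `S` is compatible with the certificate: it has the predicted values between the
classes of each pair in `fx`, and no triple and pair in a grey pair of classes are joined in the
pattern that completes an induced `C₅`. -/
def Cert.Ev {n M t K : ℕ} (σ : Cert n M t K) (S : Finset (Sym2 (Fin n))) : Prop :=
  (∀ x y, (σ.col x, σ.col y) ∈ σ.fx →
    (s(x, y) ∈ S ↔ Xor ((σ.col x, σ.col y) ∈ σ.vl) ((x, y) ∈ σ.dev.1))) ∧
  ∀ q ∈ σ.gr, ∀ a b, ¬ ∀ u v, (s(σ.pa q.1 a u, σ.pr q.2 (σ.ty q.1) b v) ∈ S ↔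
    crossPat (σ.ty q.1) u v = true)

/-- A triangle-free relation on `M` points has at most `M² / 4` pairs, by Turán's theorem. -/
lemma card_grey_le {M : ℕ} (gr : Fin M → Fin M → Prop) (hs : ∀ i j, gr i j → gr j i)
    (hi : ∀ i, ¬ gr i i) (ht : ∀ i j k, gr i j → gr i k → gr j k → False) :
    4 * #{q : Fin M × Fin M | q.1 < q.2 ∧ gr q.1 q.2} ≤ M ^ 2 := by
  let H : SimpleGraph (Fin M) := ⟨gr, ⟨fun {a b} h => hs a b h⟩, ⟨fun a h => hi a h⟩⟩
  have hcf : H.CliqueFree (2 + 1) := by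
    intro s hs
    obtain ⟨a, b, c, hab, hac, hbc, -⟩ := is3Clique_iff.1 hs
    exact ht a b c hab hac hbc
  have h1 := hcf.card_edgeFinset_le
  have h2 : #{q : Fin M × Fin M | q.1 < q.2 ∧ gr q.1 q.2} ≤ #H.edgeFinset := by
    refine card_le_card_of_injOn (fun q => s(q.1, q.2)) ?_ ?_
    · intro q hq
      simp only [coe_filter, mem_univ, true_and, Set.mem_ofPred_eq] at hq
      simp only [coe_edgeFinset, SimpleGraph.mem_edgeSet]
      exact hq.2
    · intro q hq r hr h
      simp only [coe_filter, mem_univ, true_and, Set.mem_ofPred_eq] at hq hr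
      rcases Sym2.eq_iff.1 h with h | h
      · exact Prod.ext h.1 h.2
      · exact absurd (hq.1.trans (h.2 ▸ h.1 ▸ hr.1)) (lt_irrefl _)
  have h3 : (M % 2).choose 2 = 0 := by
    rcases Nat.mod_two_eq_zero_or_one M with h | h <;> simp [h]
  simp only [Fintype.card_fin, h3] at h1
  have h4 : (M ^ 2 - (M % 2) ^ 2) * (2 - 1) / (2 * 2) ≤ M ^ 2 / 4 := by
    norm_num
    exact Nat.div_le_div_right (Nat.sub_le _ _)
  have h5 := Nat.div_mul_le_self (M ^ 2) 4
  omega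

/-! ### Existence of certificates -/

lemma sum_card_mul_card_le {n M : ℕ} (col : Fin n → Fin M) (F : Finset (Fin M × Fin M)) :
    ∑ q ∈ F, #{x | col x = q.1} * #{x | col x = q.2} ≤ n ^ 2 := by
  have h : ∑ i, #{x | col x = i} = n := by
    have := card_eq_sum_card_fiberwise (f := col) (s := univ) (t := univ) (by simp)
    simpa using this.symm
  calc ∑ q ∈ F, #{x | col x = q.1} * #{x | col x = q.2}
      ≤ ∑ q : Fin M × Fin M, #{x | col x = q.1} * #{x | col x = q.2} :=
        sum_le_sum_of_subset (subset_univ _)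
    _ = n ^ 2 := by
        rw [Fintype.sum_prod_type]
        simp only [← mul_sum, ← sum_mul, h]
        rw [sq]

lemma card_fibre_prod {n M : ℕ} (col : Fin n → Fin M) (F : Finset (Fin M × Fin M))
    (R : Fin n × Fin n → Prop) [DecidablePred R] :
    #{z : Fin n × Fin n | (col z.1, col z.2) ∈ F ∧ R z} =
      ∑ q ∈ F, #{z ∈ ({x | col x = q.1} : Finset (Fin n)) ×ˢ ({x | col x = q.2} : Finset (Fin n)) |
        R z} := by
  rw [card_eq_sum_card_fiberwise (f := fun z : Fin n × Fin n => (col z.1, col z.2)) (t := F)]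
  · refine sum_congr rfl fun q hq => ?_
    congr 1
    ext z
    simp only [mem_filter, mem_univ, true_and, mem_product]
    constructor
    · rintro ⟨⟨h1, h2⟩, rfl⟩; exact ⟨⟨rfl, rfl⟩, h2⟩
    · rintro ⟨⟨h1, h2⟩, h3⟩
      have : (col z.1, col z.2) = q := Prod.ext h1 h2
      exact ⟨⟨this ▸ hq, h3⟩, this⟩
  · intro z hz
    simp only [coe_filter, mem_univ, true_and, Set.mem_ofPred_eq] at hz
    exact hz.1

/-- If every pair of classes in `fx` has density near `1` or near `0`, according to `vl`, then few pairs
of vertices deviate from the adjacency predicted by `vl`. -/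
lemma card_dev_le {n M : ℕ} (G : SimpleGraph (Fin n)) (col : Fin n → Fin M)
    (fx vl : Finset (Fin M × Fin M)) {γ : ℝ} (hγ : 0 ≤ γ)
    (h : ∀ q ∈ fx,
      (q ∈ vl → 1 - 2 * γ ≤ (G.edgeDensity {x | col x = q.1} {x | col x = q.2} : ℝ)) ∧
      (q ∉ vl → (G.edgeDensity {x | col x = q.1} {x | col x = q.2} : ℝ) ≤ 2 * γ)) :
    (#{z : Fin n × Fin n | (col z.1, col z.2) ∈ fx ∧
      ¬ (G.Adj z.1 z.2 ↔ (col z.1, col z.2) ∈ vl)} : ℝ) ≤ 2 * γ * n ^ 2 := by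
  rw [card_fibre_prod col fx (fun z => ¬ (G.Adj z.1 z.2 ↔ (col z.1, col z.2) ∈ vl))]
  have hcell : ∀ q ∈ fx, (#{z ∈ ({x | col x = q.1} : Finset (Fin n)) ×ˢ
      ({x | col x = q.2} : Finset (Fin n)) | ¬ (G.Adj z.1 z.2 ↔ (col z.1, col z.2) ∈ vl)} : ℝ) ≤
      2 * γ * ((#{x | col x = q.1} : ℝ) * #{x | col x = q.2}) := by
    intro q hq
    by_cases hqv : q ∈ vl
    · have e : ({z ∈ ({x | col x = q.1} : Finset (Fin n)) ×ˢ
          ({x | col x = q.2} : Finset (Fin n)) | ¬ (G.Adj z.1 z.2 ↔ (col z.1, col z.2) ∈ vl)}) =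
          {z ∈ ({x | col x = q.1} : Finset (Fin n)) ×ˢ
          ({x | col x = q.2} : Finset (Fin n)) | AdjIs G false z.1 z.2} := by
        refine filter_congr fun z hz => ?_
        simp only [mem_product, mem_filter, mem_univ, true_and] at hz
        rw [hz.1, hz.2]
        simp [AdjIs, hqv]
      rw [e, card_adjIs_false]
      exact mul_le_mul_of_nonneg_right (by linarith [(h q hq).1 hqv]) (by positivity)
    · have e : ({z ∈ ({x | col x = q.1} : Finset (Fin n)) ×ˢ
          ({x | col x = q.2} : Finset (Fin n)) | ¬ (G.Adj z.1 z.2 ↔ (col z.1, col z.2) ∈ vl)}) =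
          {z ∈ ({x | col x = q.1} : Finset (Fin n)) ×ˢ
          ({x | col x = q.2} : Finset (Fin n)) | AdjIs G true z.1 z.2} := by
        refine filter_congr fun z hz => ?_
        simp only [mem_product, mem_filter, mem_univ, true_and] at hz
        rw [hz.1, hz.2]
        simp [AdjIs, hqv]
      rw [e, card_adjIs_true]
      exact mul_le_mul_of_nonneg_right ((h q hq).2 hqv) (by positivity)
  have hs : ((∑ q ∈ fx, #{x | col x = q.1} * #{x | col x = q.2} : ℕ) : ℝ) ≤ (n : ℝ) ^ 2 := by
    exact_mod_cast sum_card_mul_card_le col fx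
  push_cast at hs ⊢
  calc _ ≤ ∑ q ∈ fx, 2 * γ * ((#{x | col x = q.1} : ℝ) * #{x | col x = q.2}) := sum_le_sum hcell
    _ = 2 * γ * ∑ q ∈ fx, ((#{x | col x = q.1} : ℝ) * #{x | col x = q.2}) := by rw [mul_sum]
    _ ≤ _ := mul_le_mul_of_nonneg_left hs (by positivity)

set_option maxHeartbeats 400000 in
/-- A graph without induced `C₅` and without linear homogeneous sets is compatible with a valid
certificate with a bounded number of classes. -/
theorem exists_cert {γ : ℝ} (hγ : 0 < γ) (hγ1 : γ ≤ 1 / 4) {ε : ℝ} (hε : 0 < ε) {l : ℕ}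
    (hl : 0 < l) :
    ∃ L : ℕ, 0 < L ∧ ∃ η : ℝ, 0 < η ∧ ∃ n₁ : ℕ, ∀ n ≥ n₁, ∀ G : SimpleGraph (Fin n),
      ¬ HasInducedC5 G → (homNum G : ℝ) < η * n →
      ∃ M, l ≤ M ∧ M ≤ L ∧ ∃ σ : Cert n M (n / (14 * M)) ⌊2 * γ * n ^ 2⌋₊,
        σ.Valid ε ∧ σ.Ev G.edgeFinset := by
  obtain ⟨ε₀, hε₀, n₀, hn₀, htri⟩ := grey_triangle hγ hγ1
  obtain ⟨L, hreg⟩ := regularity_indexed (ε := min ε₀ ε) (lt_min hε₀ hε) l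
  refine ⟨L + 1, by omega, 1 / (4 * (L + 1)), by positivity,
    max (max l (14 * (L + 1))) (n₀ * (L + 1)), fun n hn G hC5 hhom => ?_⟩
  obtain ⟨M, hlM, hML, col, hsize, hnon⟩ := hreg n (by omega) G
  have hM : 0 < M := by omega
  have hn14 : 14 * (L + 1) ≤ n := le_trans (le_trans (le_max_right _ _) (le_max_left _ _)) hn
  have hnn0 : n₀ * (L + 1) ≤ n := le_trans (le_max_right _ _) hn
  set V : Fin M → Finset (Fin n) := fun i => {x | col x = i} with hV
  have hVd : ∀ i j, i ≠ j → Disjoint (V i) (V j) := by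
    intro i j hij
    rw [Finset.disjoint_left]
    intro x hx hy
    simp only [hV, mem_filter, mem_univ, true_and] at hx hy
    exact hij (hx.symm.trans hy)
  have hVn0 : ∀ i, n₀ ≤ #(V i) := by
    intro i
    refine le_trans ?_ (hsize i)
    rw [Nat.le_div_iff_mul_le hM]
    exact le_trans (Nat.mul_le_mul_left _ (by omega)) hnn0
  set gr : Fin M → Fin M → Prop := fun i j => i ≠ j ∧ G.IsUniform (min ε₀ ε) (V i) (V j) ∧
    2 * γ ≤ (G.edgeDensity (V i) (V j) : ℝ) ∧ (G.edgeDensity (V i) (V j) : ℝ) ≤ 1 - 2 * γ with hgr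
  have hgs : ∀ i j, gr i j → gr j i := by
    rintro i j ⟨h1, h2, h3, h4⟩
    refine ⟨h1.symm, h2.symm, ?_, ?_⟩ <;> rwa [edgeDensity_comm]
  have hgt : ∀ i j k, gr i j → gr i k → gr j k → False := by
    intro i j k hij hik hjk
    apply hC5
    have key : ∀ a b : Fin 3, a < b → gr (![i, j, k] a) (![i, j, k] b) := by
      intro a b hab
      fin_cases a <;> fin_cases b <;> first | (exfalso; revert hab; decide) | assumption
    refine htri _ G (fun a => V (![i, j, k] a)) (fun a => hVn0 _)
      (fun a b hab => hVd _ _ (key a b hab).1)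
      (fun a b hab => (key a b hab).2.1.mono (min_le_left _ _))
      (fun a b hab => (key a b hab).2.2.1) (fun a b hab => (key a b hab).2.2.2)
  -- A class has at least `n / M` vertices, of which the `6 t` used by `2 t` triples take `6 / 14`
  -- and the last `h` at most `1 / 4` up to rounding, whence `t = n / (14 M)`.
  set h : ℕ := ⌈(1 / (4 * (L + 1)) : ℝ) * n⌉₊ with hh
  have hnohom : ∀ S : Finset (Fin n), h ≤ #S → ¬ G.IsClique ↑S ∧ ¬ Gᶜ.IsClique ↑S := by
    intro S hS
    have : ¬ (G.IsClique ↑S ∨ Gᶜ.IsClique ↑S) := by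
      intro hc
      have h1 := card_le_homNum G S hc
      have h2 : (1 / (4 * (L + 1)) : ℝ) * n ≤ h := Nat.le_ceil _
      have h3 : (h : ℝ) ≤ homNum G := by exact_mod_cast hS.trans h1
      linarith
    exact not_or.1 this
  have hroom : 6 * (n / (14 * M)) + h ≤ n / M := by
    rw [Nat.le_div_iff_mul_le hM]
    have h1 : n / (14 * M) * (14 * M) ≤ n := Nat.div_mul_le_self _ _
    have h2 : (h : ℝ) * M ≤ n / 4 + M := by
      have h3 : (h : ℝ) < (1 / (4 * (L + 1)) : ℝ) * n + 1 := Nat.ceil_lt_add_one (by positivity)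
      have h4 : (M : ℝ) ≤ L + 1 := by exact_mod_cast (by omega : M ≤ L + 1)
      have hM0 : (0 : ℝ) < M := by exact_mod_cast hM
      calc (h : ℝ) * M ≤ ((1 / (4 * (L + 1)) : ℝ) * n + 1) * M := by gcongr
        _ = (n / 4) * (M / (L + 1)) + M := by field_simp
        _ ≤ (n / 4) * 1 + M := by gcongr; rw [div_le_one (by positivity)]; exact h4
        _ = _ := by ring
    have h5 : (14 : ℝ) * M ≤ n := by exact_mod_cast (by omega : 14 * M ≤ n)
    have h6 : ((n / (14 * M) : ℕ) : ℝ) * (14 * M) ≤ n := by exact_mod_cast h1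
    have h7 : ((6 * (n / (14 * M)) + h : ℕ) : ℝ) * M ≤ n := by push_cast; nlinarith
    exact_mod_cast h7
  have hpa : ∀ i, ∃ b, ∃ f : Fin (n / (14 * M)) → Fin 3 → Fin n,
      Function.Injective (fun x : Fin (n / (14 * M)) × Fin 3 => f x.1 x.2) ∧
      (∀ a u, f a u ∈ V i) ∧ ∀ a, IsPath3 G b (f a) := fun i =>
    exists_paths G (V i) h _ (fun S _ hS => hnohom S hS) (hroom.trans (hsize i))
  have hpr : ∀ i b, ∃ f : Fin (n / (14 * M)) → Fin 2 → Fin n,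
      Function.Injective (fun x : Fin (n / (14 * M)) × Fin 2 => f x.1 x.2) ∧
      (∀ a u, f a u ∈ V i) ∧ ∀ a, AdjIs G b (f a 0) (f a 1) := fun i b =>
    exists_pairs G b (V i) h _ (fun S _ hS => hnohom S hS)
      (le_trans (by omega) (hroom.trans (hsize i)))
  choose ty pa hpa_inj hpa_mem hpa_path using hpa
  choose pr hpr_inj hpr_mem hpr_pair using hpr
  set fx : Finset (Fin M × Fin M) := {q | q.1 < q.2 ∧ ((G.edgeDensity (V q.1) (V q.2) : ℝ) < 2 * γ ∨
    1 - 2 * γ < (G.edgeDensity (V q.1) (V q.2) : ℝ))} with hfx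
  set vl : Finset (Fin M × Fin M) := {q | 1 - 2 * γ < (G.edgeDensity (V q.1) (V q.2) : ℝ)} with hvl
  set GR : Finset (Fin M × Fin M) := {q | q.1 < q.2 ∧ gr q.1 q.2} with hGR
  set dev : Finset (Fin n × Fin n) := {z | (col z.1, col z.2) ∈ fx ∧
    ¬ (G.Adj z.1 z.2 ↔ (col z.1, col z.2) ∈ vl)} with hdev
  have hdevc : #dev ≤ ⌊2 * γ * n ^ 2⌋₊ := by
    apply Nat.le_floor
    refine le_trans (le_of_eq ?_) (card_dev_le G col fx vl hγ.le fun q hq => ?_)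
    · rw [hdev]
    · have hq' : (G.edgeDensity (V q.1) (V q.2) : ℝ) < 2 * γ ∨
        1 - 2 * γ < (G.edgeDensity (V q.1) (V q.2) : ℝ) := (mem_filter.1 hq).2.2
      refine ⟨fun h => (mem_filter.1 h).2.le, fun h => ?_⟩
      rcases hq' with h' | h'
      · exact h'.le
      · exact absurd (show q ∈ vl from mem_filter.2 ⟨mem_univ _, h'⟩) h
  refine ⟨M, hlM, by omega, ⟨col, fx, GR, vl, ⟨dev, hdevc⟩, ty, pa, pr⟩, ⟨hsize, ?_, ?_, ?_, ?_,
    ?_, ?_, ?_, hpa_inj, hpr_inj⟩, ?_, ?_⟩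
  · exact fun q hq => (mem_filter.1 hq).2.1
  · exact fun q hq => (mem_filter.1 hq).2.1
  · rw [Finset.disjoint_left]
    intro q hq hq'
    have h1 := (mem_filter.1 hq).2.2
    have h2 := (mem_filter.1 hq').2.2.2.2
    rcases h1 with h1 | h1
    · exact absurd h2.1 (not_le.2 h1)
    · exact absurd h2.2 (not_le.2 h1)
  · show 4 * #GR ≤ M ^ 2
    refine le_trans (le_of_eq ?_) (card_grey_le gr hgs (fun i h => h.1 rfl) hgt)
    congr 2
    ext q
    simp only [hGR, mem_filter]
  · set N : Finset (Fin M × Fin M) := {q | q.1 < q.2 ∧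
      ¬ G.IsUniform (min ε₀ ε) {x | col x = q.1} {x | col x = q.2}} with hN
    have hall : ({q | q.1 < q.2} : Finset (Fin M × Fin M)) ⊆ fx ∪ GR ∪ N := by
      intro q hq
      have hlt : q.1 < q.2 := (mem_filter.1 hq).2
      simp only [mem_union]
      by_cases h1 : q ∈ fx
      · exact Or.inl (Or.inl h1)
      by_cases h2 : G.IsUniform (min ε₀ ε) (V q.1) (V q.2)
      · left; right
        refine mem_filter.2 ⟨mem_univ _, hlt, hlt.ne, h2, ?_⟩
        by_contra hc
        apply h1
        refine mem_filter.2 ⟨mem_univ _, hlt, ?_⟩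
        rw [not_and_or, not_le, not_le] at hc
        exact hc
      · right
        exact mem_filter.2 ⟨mem_univ _, hlt, h2⟩
    have hc1 : #({q | q.1 < q.2} : Finset (Fin M × Fin M)) ≤ #fx + #GR + #N :=
      (card_le_card hall).trans ((card_union_le _ _).trans (by gcongr; exact card_union_le _ _))
    have hc2 : (M : ℝ) * (M - 1) / 2 ≤ (#({q | q.1 < q.2} : Finset (Fin M × Fin M)) : ℝ) := by
      have h1 : M ^ 2 ≤ M + 2 * #({q | q.1 < q.2} : Finset (Fin M × Fin M)) := by
        have e1 : (univ : Finset (Fin M × Fin M)) ⊆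
            (univ.image fun i : Fin M => (i, i)) ∪ ({q | q.1 < q.2} : Finset (Fin M × Fin M)) ∪
            ({q | q.1 < q.2} : Finset (Fin M × Fin M)).image Prod.swap := by
          rintro ⟨i, j⟩ -
          rcases lt_trichotomy i j with h | rfl | h
          · simp [h]
          · simp
          · simp only [mem_union]; right
            exact mem_image.2 ⟨(j, i), by simp [h], rfl⟩
        have e2 := (card_le_card e1).trans ((card_union_le _ _).trans
          (add_le_add (card_union_le _ _) card_image_le))
        have e3 : #(univ.image fun i : Fin M => (i, i)) ≤ M :=
          card_image_le.trans (by simp)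
        simp only [card_univ, Fintype.card_prod, Fintype.card_fin] at e2
        rw [sq]; omega
      have h2 : (M : ℝ) ^ 2 ≤ M + 2 * #({q | q.1 < q.2} : Finset (Fin M × Fin M)) := by
        exact_mod_cast h1
      nlinarith
    have hc3 : (#({q | q.1 < q.2} : Finset (Fin M × Fin M)) : ℝ) ≤ #fx + #GR + #N := by
      exact_mod_cast hc1
    have hc4 : (#N : ℝ) ≤ ε * M ^ 2 := hnon.trans (by gcongr; exact min_le_right _ _)
    show (M : ℝ) * (M - 1) / 2 ≤ #fx + #GR + ε * M ^ 2
    linarith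
  · exact fun i a u => (mem_filter.1 (hpa_mem i a u)).2
  · exact fun i b a u => (mem_filter.1 (hpr_mem i b a u)).2
  · intro x y hxy
    have hd : (x, y) ∈ dev ↔ ¬ (G.Adj x y ↔ (col x, col y) ∈ vl) := by
      simp only [hdev, mem_filter, mem_univ, true_and]
      exact and_iff_right hxy
    simp only [mem_edgeFinset, SimpleGraph.mem_edgeSet, hd, Xor]
    tauto
  · intro q hq a b hcon
    obtain ⟨hlt, -⟩ := (mem_filter.1 hq).2
    apply hC5
    refine hasInducedC5_of_cross (f := pa q.1 a) (g := pr q.2 (ty q.1) b) (b := ty q.1)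
      ?_ ?_ ?_ (hpa_path q.1 a) (hpr_pair q.2 (ty q.1) b) ?_
    · intro u v h
      have := @hpa_inj q.1 (a, u) (a, v) h
      simpa using this
    · intro u v h
      have := @hpr_inj q.2 (ty q.1) (b, u) (b, v) h
      simpa using this
    · intro u v h
      exact Finset.disjoint_left.1 (hVd q.1 q.2 hlt.ne) (hpa_mem q.1 a u) (h ▸ hpr_mem q.2 _ b v)
    · intro u v
      have := hcon u v
      simpa [AdjIs, mem_edgeFinset] using this

/-! ### The probability of a certificate -/

lemma sym2_eq_of_col_lt {n M : ℕ} {col : Fin n → Fin M} {x y x' y' : Fin n}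
    (h : col x < col y) (hlt : col x' < col y') (he : s(x, y) = s(x', y')) : x = x' ∧ y = y' := by
  rcases Sym2.eq_iff.1 he with h1 | ⟨rfl, rfl⟩
  · exact h1
  · exact absurd h (lt_asymm hlt)

/-- A form of `sum_avoid_le` for an event that forces the prescribed outcomes to be avoided. -/
lemma sum_le_of_avoid {ι κ : Type} {p : ℝ} (hp0 : 0 < p) (hp : p ≤ 1 / 2)
    (B π : κ → Finset ι) (K : Finset κ) (E : Finset ι) (hB : ∀ k ∈ K, B k ⊆ E)
    (hπ : ∀ k ∈ K, π k ⊆ B k) (hd : ∀ k ∈ K, ∀ l ∈ K, k ≠ l → ∀ e, e ∈ B k → e ∈ B l → False)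
    (A : Finset ι → Prop) (hA : ∀ S, A S → ∀ k ∈ K, ¬ ∀ e ∈ B k, (e ∈ S ↔ e ∈ π k)) :
    ∑ S ∈ E.powerset with A S, bernWt p E S ≤ ∏ k ∈ K, (1 - p ^ #(B k)) := by
  refine le_trans (sum_le_sum_of_subset_of_nonneg ?_ fun S _ _ =>
    bernWt_nonneg hp0.le (by linarith) _ _) (sum_avoid_le hp0 hp B π K E hB hπ fun k hk l hl h =>
      Finset.disjoint_left.2 (hd k hk l hl h))
  intro S hS
  rw [mem_filter] at hS ⊢
  refine ⟨hS.1, fun k hk hcon => hA S hS.2 k hk fun e he => ?_⟩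
  rw [← hcon, mem_inter]
  exact ⟨fun h => ⟨h, he⟩, fun h => h.1⟩

/-- The `3 × 2` cells between a path in one class and a pair in another. -/
def Cert.cells {n M t K : ℕ} (σ : Cert n M t K) (k : (Fin M × Fin M) × Fin t × Fin t)
    (w : Fin 3 × Fin 2) : Sym2 (Fin n) :=
  s(σ.pa k.1.1 k.2.1 w.1, σ.pr k.1.2 (σ.ty k.1.1) k.2.2 w.2)

/-- The blocks are the single vertex pairs between classes of a pair in `fx`, where the wrong value is
avoided, and the `3 × 2` cells for a grey pair, where the pattern completing a `C₅` is avoided. A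
block of one element avoiding an outcome has probability `p` or `1 - p`, hence at most `1 - p`. -/
theorem sum_ev_le {n M t K : ℕ} {ε p : ℝ} (hp0 : 0 < p) (hp : p ≤ 1 / 2) (σ : Cert n M t K)
    (hσ : σ.Valid ε) :
    ∑ S ∈ (⊤ : SimpleGraph (Fin n)).edgeFinset.powerset with σ.Ev S,
        bernWt p (⊤ : SimpleGraph (Fin n)).edgeFinset S ≤
      (1 - p) ^ (#σ.fx * (n / M) ^ 2) * (1 - p ^ 6) ^ (#σ.gr * t ^ 2) := by
  set E := (⊤ : SimpleGraph (Fin n)).edgeFinset with hE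
  have hEm : ∀ x y, s(x, y) ∈ E ↔ x ≠ y := by intro x y; simp [hE]
  set F : Finset (Fin n × Fin n) := {z | (σ.col z.1, σ.col z.2) ∈ σ.fx} with hF
  set Q : Finset ((Fin M × Fin M) × Fin t × Fin t) := σ.gr ×ˢ univ with hQ
  let B : (Fin n × Fin n) ⊕ ((Fin M × Fin M) × Fin t × Fin t) → Finset (Sym2 (Fin n)) :=
    Sum.elim (fun z => {s(z.1, z.2)}) (fun k => univ.image (σ.cells k))
  let π : (Fin n × Fin n) ⊕ ((Fin M × Fin M) × Fin t × Fin t) → Finset (Sym2 (Fin n)) :=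
    Sum.elim (fun z => if Xor ((σ.col z.1, σ.col z.2) ∈ σ.vl) ((z.1, z.2) ∈ σ.dev.1) then ∅
      else {s(z.1, z.2)})
      (fun k => (univ.filter fun w : Fin 3 × Fin 2 => crossPat (σ.ty k.1.1) w.1 w.2 = true).image
        (σ.cells k))
  have hFlt : ∀ z ∈ F, σ.col z.1 < σ.col z.2 := fun z hz => hσ.fx_lt _ (mem_filter.1 hz).2
  have hQlt : ∀ k ∈ Q, ∀ u v, σ.col (σ.pa k.1.1 k.2.1 u) <
      σ.col (σ.pr k.1.2 (σ.ty k.1.1) k.2.2 v) := by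
    intro k hk u v
    rw [hσ.pa_col, hσ.pr_col]
    exact hσ.gr_lt _ (mem_product.1 hk).1
  have hinj : ∀ k ∈ Q, ∀ k' ∈ Q, ∀ w w', σ.cells k w = σ.cells k' w' → k = k' ∧ w = w' := by
    rintro ⟨⟨i, j⟩, a, b⟩ hk ⟨⟨i', j'⟩, a', b'⟩ hk' ⟨u, v⟩ ⟨u', v'⟩ h
    obtain ⟨h1, h2⟩ := sym2_eq_of_col_lt (hQlt _ hk u v) (hQlt _ hk' u' v') h
    simp only at h1 h2
    have hi : i = i' := by rw [← hσ.pa_col i a u, h1, hσ.pa_col]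
    have hj : j = j' := by rw [← hσ.pr_col j (σ.ty i) b v, h2, hσ.pr_col]
    subst hi hj
    have e1 := hσ.pa_inj i (a₁ := (a, u)) (a₂ := (a', u')) h1
    have e2 := hσ.pr_inj j (σ.ty i) (a₁ := (b, v)) (a₂ := (b', v')) h2
    simp only [Prod.mk.injEq] at e1 e2 ⊢
    tauto
  have hmain := sum_le_of_avoid hp0 hp B π (F.disjSum Q) E ?_ ?_ ?_ σ.Ev ?_
  · refine le_trans hmain ?_
    · rw [prod_disjSum]
      have hp6 : p ^ 6 ≤ 1 := pow_le_one₀ hp0.le (by linarith)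
      refine mul_le_mul ?_ ?_ (prod_nonneg fun k _ => ?_) (pow_nonneg (by linarith) _)
      · simp only [B, Sum.elim_inl, card_singleton, pow_one, prod_const]
        refine pow_le_pow_of_le_one (by linarith) (by linarith) ?_
        have h1 := card_fibre_prod σ.col σ.fx (fun _ => True)
        simp only [and_true, filter_true, card_product] at h1
        rw [hF, h1]
        have h2 : ∑ q ∈ σ.fx, (n / M) ^ 2 ≤
            ∑ q ∈ σ.fx, #{x | σ.col x = q.1} * #{x | σ.col x = q.2} := by
          refine sum_le_sum fun q _ => ?_
          rw [sq]
          exact Nat.mul_le_mul (hσ.size _) (hσ.size _)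
        simpa using h2
      · have : #Q = #σ.gr * t ^ 2 := by
          rw [hQ, card_product]; simp [sq]
        rw [← this, ← prod_const]
        refine prod_le_prod (fun k _ => ?_) fun k _ => ?_
        · have := pow_le_one₀ (n := #(B (Sum.inr k))) hp0.le (by linarith)
          linarith
        · have hc : #(B (Sum.inr k)) ≤ 6 := card_image_le.trans (by simp)
          have := pow_le_pow_of_le_one hp0.le (by linarith) hc
          linarith
      · have := pow_le_one₀ (n := #(B (Sum.inr k))) hp0.le (by linarith)
        linarith
  · rintro (z | k) hk e he
    · rw [inl_mem_disjSum] at hk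
      simp only [B, Sum.elim_inl, mem_singleton] at he
      rw [he, hEm]
      intro h
      exact (hFlt z hk).ne (by rw [h])
    · rw [inr_mem_disjSum] at hk
      simp only [B, Sum.elim_inr, mem_image, mem_univ, true_and] at he
      obtain ⟨w, rfl⟩ := he
      rw [Cert.cells, hEm]
      intro h
      exact (hQlt k hk w.1 w.2).ne (by rw [h])
  · rintro (z | k) hk
    · simp only [B, π, Sum.elim_inl]
      split_ifs <;> simp
    · exact image_subset_image (filter_subset _ _)
  · rintro (z | k) hk (z' | k') hk' hne e he he'
    all_goals
      simp only [inl_mem_disjSum, inr_mem_disjSum] at hk hk'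
      simp only [B, Sum.elim_inl, Sum.elim_inr, mem_singleton, mem_image, mem_univ, true_and]
        at he he'
    · obtain ⟨h1, h2⟩ := sym2_eq_of_col_lt (hFlt z hk) (hFlt z' hk') (he.symm.trans he')
      exact hne (congrArg _ (Prod.ext h1 h2))
    · obtain ⟨w, rfl⟩ := he'
      obtain ⟨h1, h2⟩ := sym2_eq_of_col_lt (hQlt k' hk' w.1 w.2) (hFlt z hk) he
      have hz := (mem_filter.1 hk).2
      rw [← h1, ← h2, hσ.pa_col, hσ.pr_col] at hz
      exact Finset.disjoint_left.1 hσ.disj hz (mem_product.1 hk').1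
    · obtain ⟨w, rfl⟩ := he
      obtain ⟨h1, h2⟩ := sym2_eq_of_col_lt (hQlt k hk w.1 w.2) (hFlt z' hk') he'
      have hz := (mem_filter.1 hk').2
      rw [← h1, ← h2, hσ.pa_col, hσ.pr_col] at hz
      exact Finset.disjoint_left.1 hσ.disj hz (mem_product.1 hk).1
    · obtain ⟨w, rfl⟩ := he
      obtain ⟨w', h⟩ := he'
      exact hne (congrArg _ (hinj k hk k' hk' w w' h.symm).1)
  · rintro S ⟨ev1, ev2⟩ (z | k) hk hcon
    · rw [inl_mem_disjSum] at hk
      have h1 := ev1 z.1 z.2 (mem_filter.1 hk).2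
      have h2 := hcon s(z.1, z.2) (mem_singleton_self _)
      simp only [π, Sum.elim_inl] at h2
      split_ifs at h2 with hx
      · exact absurd (h2.1 (h1.2 hx)) (notMem_empty _)
      · exact hx (h1.1 (h2.2 (mem_singleton_self _)))
    · rw [inr_mem_disjSum] at hk
      refine ev2 k.1 (mem_product.1 hk).1 k.2.1 k.2.2 fun u v => ?_
      refine (hcon (σ.cells k (u, v)) (mem_image_of_mem _ (mem_univ _))).trans ?_
      simp only [π, Sum.elim_inr, mem_image]
      constructor
      · rintro ⟨w, hw, hwe⟩
        obtain ⟨-, rfl⟩ := hinj k hk k hk _ _ hwe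
        exact (mem_filter.1 hw).2
      · intro h
        exact ⟨(u, v), mem_filter.2 ⟨mem_univ _, h⟩, rfl⟩

/-! ### The number of certificates and the exponent -/

/-- Every lower-order term of the counting argument is absorbed by `κ n ^ 2`. -/
lemma eventually_lower_order (C₁ C₂ C₃ : ℝ) {κ : ℝ} (hκ : 0 < κ) :
    ∀ᶠ n : ℕ in Filter.atTop, C₁ + C₂ * n + C₃ * (n * Real.log n) ≤ κ * (n : ℝ) ^ 2 := by
  have h1 : ∀ᶠ n : ℕ in Filter.atTop, |Real.log n| ≤ κ / (3 * (|C₃| + 1)) * |(n : ℝ)| := by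
    have := (Real.isLittleO_log_id_atTop.comp_tendsto tendsto_natCast_atTop_atTop).bound
      (show 0 < κ / (3 * (|C₃| + 1)) by positivity)
    simpa using this
  have h2 : ∀ᶠ n : ℕ in Filter.atTop, 3 * |C₂| / κ ≤ (n : ℝ) :=
    tendsto_natCast_atTop_atTop.eventually_ge_atTop _
  have h3 : ∀ᶠ n : ℕ in Filter.atTop, 3 * |C₁| / κ ≤ (n : ℝ) :=
    tendsto_natCast_atTop_atTop.eventually_ge_atTop _
  filter_upwards [h1, h2, h3, Filter.eventually_ge_atTop 1] with n h1 h2 h3 hn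
  have hn1 : (1 : ℝ) ≤ n := by exact_mod_cast hn
  have hn0 : (0 : ℝ) ≤ n := by linarith
  rw [div_le_iff₀ hκ] at h2 h3
  have e1 : C₁ ≤ κ / 3 * (n : ℝ) ^ 2 := by
    have : |C₁| ≤ κ / 3 * n := by linarith
    have h4 : κ / 3 * (n : ℝ) ≤ κ / 3 * (n : ℝ) ^ 2 := by
      have : (n : ℝ) ≤ (n : ℝ) ^ 2 := by nlinarith
      gcongr
    linarith [le_abs_self C₁]
  have e2 : C₂ * n ≤ κ / 3 * (n : ℝ) ^ 2 := by
    have : C₂ ≤ κ / 3 * n := by linarith [le_abs_self C₂]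
    calc C₂ * n ≤ κ / 3 * n * n := by gcongr
      _ = _ := by ring
  have e3 : C₃ * (n * Real.log n) ≤ κ / 3 * (n : ℝ) ^ 2 := by
    have hl : 0 ≤ Real.log n := Real.log_nonneg hn1
    rw [abs_of_nonneg hl, abs_of_nonneg hn0] at h1
    calc C₃ * (n * Real.log n) ≤ (|C₃| + 1) * (n * Real.log n) := by
          gcongr; linarith [le_abs_self C₃]
      _ ≤ (|C₃| + 1) * (n * (κ / (3 * (|C₃| + 1)) * n)) := by gcongr
      _ = _ := by field_simp
  linarith

/-- The number of sets `D` with `|D| ≤ K` is at most `(1 + y) ^ |α| / y ^ K`, by comparison with the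
generating function of all subsets. -/
lemma card_small_subsets {α : Type} [Fintype α] (K : ℕ) {y : ℝ} (hy0 : 0 < y) (hy1 : y ≤ 1) :
    (Fintype.card {D : Finset α // #D ≤ K} : ℝ) ≤
      Real.exp (y * Fintype.card α + K * (-Real.log y)) := by
  have h1 : (Fintype.card {D : Finset α // #D ≤ K} : ℝ) * y ^ K ≤ (1 + y) ^ Fintype.card α := by
    have e : ∑ D ∈ (univ : Finset α).powerset, y ^ #D * 1 ^ (#(univ : Finset α) - #D) =
        (y + 1) ^ #(univ : Finset α) := Finset.sum_pow_mul_eq_add_pow y 1 univ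
    simp only [one_pow, mul_one, card_univ, powerset_univ] at e
    rw [add_comm 1 y, ← e, Fintype.card_subtype]
    calc (#{D : Finset α | #D ≤ K} : ℝ) * y ^ K = ∑ D : Finset α with #D ≤ K, y ^ K := by
          rw [sum_const, nsmul_eq_mul]
      _ ≤ ∑ D : Finset α with #D ≤ K, y ^ #D := by
          refine sum_le_sum fun D hD => ?_
          exact pow_le_pow_of_le_one hy0.le hy1 (mem_filter.1 hD).2
      _ ≤ _ := sum_le_sum_of_subset_of_nonneg (subset_univ _) fun D _ _ => by positivity
  have h2 : (1 + y) ^ Fintype.card α ≤ Real.exp (y * Fintype.card α) := by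
    calc (1 + y) ^ Fintype.card α ≤ (Real.exp y) ^ Fintype.card α := by
          gcongr; linarith [Real.add_one_le_exp y]
      _ = _ := by rw [← Real.exp_nat_mul]; ring_nf
  have h3 : Real.exp (K * (-Real.log y)) * y ^ K = 1 := by
    rw [show y ^ K = Real.exp (K * Real.log y) by rw [Real.exp_nat_mul, Real.exp_log hy0],
      ← Real.exp_add]
    simp
  rw [Real.exp_add]
  have hyK : 0 < y ^ K := by positivity
  calc _ = (Fintype.card {D : Finset α // #D ≤ K} : ℝ) * y ^ K * Real.exp (K * (-Real.log y)) := by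
        rw [mul_assoc, mul_comm (y ^ K), h3, mul_one]
    _ ≤ _ := by gcongr; exact h1.trans h2

/-- The components of a certificate, as a tuple. -/
def Cert.toTuple {n M t K : ℕ} (σ : Cert n M t K) :
    (Fin n → Fin M) × Finset (Fin M × Fin M) × Finset (Fin M × Fin M) × Finset (Fin M × Fin M) ×
      {D : Finset (Fin n × Fin n) // #D ≤ K} × (Fin M → Bool) ×
      (Fin M → Fin t → Fin 3 → Fin n) × (Fin M → Bool → Fin t → Fin 2 → Fin n) :=
  (σ.col, σ.fx, σ.gr, σ.vl, σ.dev, σ.ty, σ.pa, σ.pr)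

lemma Cert.toTuple_injective {n M t K : ℕ} :
    Function.Injective (Cert.toTuple : Cert n M t K → _) := by
  rintro ⟨⟩ ⟨⟩ h
  simp only [Cert.toTuple, Prod.mk.injEq] at h
  obtain ⟨rfl, rfl, rfl, rfl, rfl, rfl, rfl, rfl⟩ := h
  rfl

noncomputable instance {n M t K : ℕ} : Fintype (Cert n M t K) :=
  Fintype.ofInjective _ Cert.toTuple_injective

/-- The triples and the two kinds of pairs in `M` classes involve `7 t M` vertices, which accounts for
a factor `n ^ n`; the colouring gives `M ^ n`. -/
lemma card_cert_le {n M t K : ℕ} (hn : 0 < n) (ht : 7 * t * M ≤ n) {y : ℝ} (hy0 : 0 < y)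
    (hy1 : y ≤ 1) :
    (Fintype.card (Cert n M t K) : ℝ) ≤
      ((M : ℝ) * n) ^ n * 2 ^ (3 * M ^ 2 + M) * Real.exp (y * n ^ 2 + K * (-Real.log y)) := by
  have h1 := Fintype.card_le_of_injective _ (Cert.toTuple_injective (n := n) (M := M) (t := t)
    (K := K))
  simp only [Fintype.card_prod, Fintype.card_fun, Fintype.card_fin, Fintype.card_finset,
    Fintype.card_bool] at h1
  have h2 := card_small_subsets (α := Fin n × Fin n) K hy0 hy1
  simp only [Fintype.card_prod, Fintype.card_fin] at h2
  set D := Fintype.card {D : Finset (Fin n × Fin n) // #D ≤ K} with hD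
  have h3 : Fintype.card (Cert n M t K) ≤ M ^ n * n ^ n * 2 ^ (3 * M ^ 2 + M) * D := by
    refine h1.trans ?_
    calc _ = M ^ n * n ^ (7 * t * M) * 2 ^ (3 * M ^ 2 + M) * D := by
          simp only [← pow_mul]
          rw [show 7 * t * M = 3 * t * M + 2 * t * 2 * M by ring, pow_add, pow_add,
            show 3 * M ^ 2 = M * M + M * M + M * M by ring, pow_add, pow_add]
          ring
      _ ≤ _ := by gcongr
  calc (Fintype.card (Cert n M t K) : ℝ) ≤ ((M ^ n * n ^ n * 2 ^ (3 * M ^ 2 + M) * D : ℕ) : ℝ) := by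
        exact_mod_cast h3
    _ = ((M : ℝ) * n) ^ n * 2 ^ (3 * M ^ 2 + M) * D := by push_cast; rw [mul_pow]
    _ ≤ _ := by
        gcongr
        refine h2.trans (le_of_eq ?_)
        push_cast; ring_nf

/-- Arithmetic of the exponent: with at most a quarter of the pairs grey, `α f + δ₀ g` stays
above `α / 4 + δ₀ / 8`. -/
lemma exponent_arith {α δ₀ f g ε θ M l : ℝ} (hα1 : α ≤ 1) (hδ : 0 ≤ δ₀) (hαδ : δ₀ ≤ α)
    (hf1 : f ≤ M ^ 2) (hg : 4 * g ≤ M ^ 2)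
    (htot : M * (M - 1) / 2 ≤ f + g + ε * M ^ 2) (hl : 0 < l) (hlM : l ≤ M)
    (hε : 0 ≤ ε) (hθ : 0 ≤ θ) (hsum : 1 / (2 * l) + ε + 2 * θ ≤ δ₀ / 8) :
    (α / 4 + δ₀ / 8) * M ^ 2 ≤ α * f * (1 - 2 * θ) + δ₀ * g := by
  have hα0 : 0 ≤ α := hδ.trans hαδ
  have hM : 0 < M := hl.trans_le hlM
  have h1 : M ≤ 1 / l * M ^ 2 := by
    rw [div_mul_eq_mul_div, one_mul, le_div_iff₀ hl]; nlinarith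
  have h2 : M ^ 2 / 2 - 1 / (2 * l) * M ^ 2 - g - ε * M ^ 2 ≤ f := by
    have : 1 / (2 * l) * M ^ 2 = 1 / l * M ^ 2 / 2 := by field_simp
    rw [this]; nlinarith
  have h3 : α * f * (2 * θ) ≤ α * (2 * θ * M ^ 2) := by
    have : f * (2 * θ) ≤ M ^ 2 * (2 * θ) := by gcongr
    nlinarith
  have h4 : α * (M ^ 2 / 2 - 1 / (2 * l) * M ^ 2 - g - ε * M ^ 2) ≤ α * f := by gcongr
  have h5 : (α - δ₀) * g ≤ (α - δ₀) * (M ^ 2 / 4) :=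
    mul_le_mul_of_nonneg_left (by linarith) (by linarith)
  have hX : 0 ≤ 1 / (2 * l) + ε + 2 * θ := by positivity
  have h6 : α * ((1 / (2 * l) + ε + 2 * θ) * M ^ 2) ≤ 1 * (δ₀ / 8 * M ^ 2) := by gcongr
  nlinarith

/-- The bound of `sum_ev_le` with `t = n / (14 M)`. The constant `256 = 16²` comes from
`t ≥ n / (16 M)`, valid for `112 M ≤ n`. -/
lemma event_bound {n M : ℕ} {K : ℕ} {ε p θ l α : ℝ} (hp0 : 0 < p) (hp : p ≤ 1 / 2)
    (hα : α = -Real.log (1 - p)) (σ : Cert n M (n / (14 * M)) K) (hσ : σ.Valid ε)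
    (hl : 0 < l) (hlM : l ≤ M) (hε : 0 ≤ ε) (hθ : 0 ≤ θ)
    (hsum : 1 / (2 * l) + ε + 2 * θ ≤ p ^ 6 / 256 / 8) (hθ1 : θ ≤ 1)
    (hn1 : (M : ℝ) ≤ θ * n) (hn2 : 112 * M ≤ n) :
    (1 - p) ^ (#σ.fx * (n / M) ^ 2) * (1 - p ^ 6) ^ (#σ.gr * (n / (14 * M)) ^ 2) ≤
      Real.exp (-(n : ℝ) ^ 2 * (α / 4 + p ^ 6 / 256 / 8)) := by
  have hM : (0 : ℝ) < M := hl.trans_le hlM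
  have hMn : 0 < M := by exact_mod_cast hM
  have hp6 : 0 < p ^ 6 := by positivity
  have hpp : p ^ 6 ≤ p := by
    calc p ^ 6 ≤ p ^ 1 := pow_le_pow_of_le_one hp0.le (by linarith) (by norm_num)
      _ = p := pow_one p
  have hαp : p ≤ α := by
    rw [hα]; linarith [Real.log_le_sub_one_of_pos (show 0 < 1 - p by linarith)]
  have hα1 : α ≤ 1 := by
    have h1 : Real.log (1 / 2) ≤ Real.log (1 - p) := Real.log_le_log (by norm_num) (by linarith)
    have h2 : Real.log (1 / 2) = -Real.log 2 := by rw [one_div, Real.log_inv]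
    have := Real.log_two_lt_d9
    rw [hα]; linarith
  have ha : (n : ℝ) / M * (1 - θ) ≤ ((n / M : ℕ) : ℝ) := by
    have h1 : (n : ℝ) / M < ((n / M : ℕ) : ℝ) + 1 := by
      rw [div_lt_iff₀ hM]
      have := Nat.lt_mul_div_succ n hMn
      have h2 : (n : ℝ) < M * ((n / M : ℕ) + 1) := by exact_mod_cast this
      linarith
    have h2 : 1 ≤ θ * ((n : ℝ) / M) := by
      rw [← mul_div_assoc, le_div_iff₀ hM]; linarith
    nlinarith
  have ht : (n : ℝ) / M / 16 ≤ ((n / (14 * M) : ℕ) : ℝ) := by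
    have h1 : (n : ℝ) / (14 * M) < ((n / (14 * M) : ℕ) : ℝ) + 1 := by
      rw [div_lt_iff₀ (by positivity)]
      have := Nat.lt_mul_div_succ n (show 0 < 14 * M by omega)
      have h2 : (n : ℝ) < 14 * M * ((n / (14 * M) : ℕ) + 1) := by exact_mod_cast this
      linarith
    have h2 : 112 ≤ (n : ℝ) / M := by
      rw [le_div_iff₀ hM]; exact_mod_cast hn2
    have h3 : (n : ℝ) / (14 * M) = n / M / 14 := by field_simp
    rw [h3] at h1
    linarith
  have ha2 : ((n : ℝ) / M) ^ 2 * (1 - 2 * θ) ≤ ((n / M : ℕ) : ℝ) ^ 2 := by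
    calc ((n : ℝ) / M) ^ 2 * (1 - 2 * θ) ≤ ((n : ℝ) / M * (1 - θ)) ^ 2 := by
          rw [mul_pow]; gcongr; nlinarith
      _ ≤ _ := by gcongr
  have ht2 : ((n : ℝ) / M) ^ 2 / 256 ≤ ((n / (14 * M) : ℕ) : ℝ) ^ 2 := by
    calc ((n : ℝ) / M) ^ 2 / 256 = ((n : ℝ) / M / 16) ^ 2 := by ring
      _ ≤ _ := by gcongr
  have hfx : (#σ.fx : ℝ) ≤ (M : ℝ) ^ 2 := by
    have : #σ.fx ≤ M ^ 2 := (card_le_univ _).trans (by simp [sq])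
    exact_mod_cast this
  have hgr : 4 * (#σ.gr : ℝ) ≤ (M : ℝ) ^ 2 := by exact_mod_cast hσ.turan
  have hmain := exponent_arith (δ₀ := p ^ 6 / 256) hα1 (by positivity) (by linarith) hfx hgr
    hσ.total hl hlM hε hθ hsum
  have e1 : (1 - p) ^ (#σ.fx * (n / M) ^ 2) =
      Real.exp (-(α * (#σ.fx * ((n / M : ℕ) : ℝ) ^ 2))) := by
    have : 1 - p = Real.exp (-α) := by rw [hα, neg_neg, Real.exp_log (by linarith)]
    rw [this, ← Real.exp_nat_mul]
    push_cast; ring_nf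
  have e2 : (1 - p ^ 6) ^ (#σ.gr * (n / (14 * M)) ^ 2) ≤
      Real.exp (-(p ^ 6 * (#σ.gr * ((n / (14 * M) : ℕ) : ℝ) ^ 2))) := by
    calc (1 - p ^ 6) ^ (#σ.gr * (n / (14 * M)) ^ 2)
        ≤ (Real.exp (-p ^ 6)) ^ (#σ.gr * (n / (14 * M)) ^ 2) := by
          gcongr
          · linarith
          · linarith [Real.add_one_le_exp (-p ^ 6)]
      _ = _ := by rw [← Real.exp_nat_mul]; push_cast; ring_nf
  calc _ ≤ Real.exp (-(α * (#σ.fx * ((n / M : ℕ) : ℝ) ^ 2))) *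
        Real.exp (-(p ^ 6 * (#σ.gr * ((n / (14 * M) : ℕ) : ℝ) ^ 2))) := by
        rw [e1]; gcongr
    _ ≤ _ := by
        rw [← Real.exp_add, Real.exp_le_exp]
        have k1 : α * (#σ.fx * (((n : ℝ) / M) ^ 2 * (1 - 2 * θ))) ≤
            α * (#σ.fx * ((n / M : ℕ) : ℝ) ^ 2) := by
          have : 0 ≤ α := by linarith
          gcongr
        have k2 : p ^ 6 * (#σ.gr * (((n : ℝ) / M) ^ 2 / 256)) ≤
            p ^ 6 * (#σ.gr * ((n / (14 * M) : ℕ) : ℝ) ^ 2) := by gcongr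
        have k3 : ((n : ℝ) / M) ^ 2 * ((α / 4 + p ^ 6 / 256 / 8) * M ^ 2) ≤
            ((n : ℝ) / M) ^ 2 * (α * #σ.fx * (1 - 2 * θ) + p ^ 6 / 256 * #σ.gr) := by gcongr
        have k4 : ((n : ℝ) / M) ^ 2 * ((α / 4 + p ^ 6 / 256 / 8) * M ^ 2) =
            n ^ 2 * (α / 4 + p ^ 6 / 256 / 8) := by field_simp
        nlinarith

/-! ### The union bound -/

/-- The graphs without induced `C₅` whose homogeneous sets are all smaller than `η n`. -/
noncomputable def badGraphs (n : ℕ) (η : ℝ) : Finset (SimpleGraph (Fin n)) :=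
  univ.filter fun G => ¬ HasInducedC5 G ∧ (homNum G : ℝ) < η * n

/-- The weight of a family of graphs satisfying an event is at most the probability of the event. -/
lemma sum_graph_le {n : ℕ} {p : ℝ} (hp0 : 0 ≤ p) (hp1 : p ≤ 1) (Bd : Finset (SimpleGraph (Fin n)))
    (A : Finset (Sym2 (Fin n)) → Prop) :
    (∑ G ∈ Bd, if A G.edgeFinset then bernWt p (⊤ : SimpleGraph (Fin n)).edgeFinset G.edgeFinset
      else 0) ≤ ∑ S ∈ (⊤ : SimpleGraph (Fin n)).edgeFinset.powerset with A S,
        bernWt p (⊤ : SimpleGraph (Fin n)).edgeFinset S := by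
  rw [← sum_filter]
  have hinj : Set.InjOn (fun G : SimpleGraph (Fin n) => G.edgeFinset)
      ↑(Bd.filter fun G => A G.edgeFinset) := by
    intro G _ H _ h
    exact edgeFinset_inj.1 h
  rw [← sum_image (f := fun S => bernWt p (⊤ : SimpleGraph (Fin n)).edgeFinset S) hinj]
  refine sum_le_sum_of_subset_of_nonneg ?_ fun S _ _ => bernWt_nonneg hp0 hp1 _ _
  intro S hS
  obtain ⟨G, hG, rfl⟩ := mem_image.1 hS
  rw [mem_filter, mem_powerset]
  refine ⟨?_, (mem_filter.1 hG).2⟩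
  rw [edgeFinset_subset_edgeFinset]
  exact le_top

/-- The union bound in weighted form. -/
lemma sum_le_union {ι : Type} {β : ℕ → Type} [∀ M, Fintype (β M)] (Bd : Finset ι) (w : ι → ℝ)
    (hw : ∀ a, 0 ≤ w a) (I : Finset ℕ) (Vd : ∀ M, β M → Prop) (Ev : ∀ M, β M → ι → Prop)
    (h : ∀ a ∈ Bd, ∃ M ∈ I, ∃ σ, Vd M σ ∧ Ev M σ a) :
    ∑ a ∈ Bd, w a ≤
      ∑ M ∈ I, ∑ σ : β M with Vd M σ, ∑ a ∈ Bd, if Ev M σ a then w a else 0 := by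
  have hG : ∀ a ∈ Bd, w a ≤ ∑ M ∈ I, ∑ σ : β M with Vd M σ, if Ev M σ a then w a else 0 := by
    intro a ha
    obtain ⟨M, hM, σ, hσ, hev⟩ := h a ha
    have hnn : ∀ M (τ : β M), 0 ≤ if Ev M τ a then w a else 0 := by
      intro M τ; split_ifs
      · exact hw _
      · exact le_rfl
    refine le_trans ?_ (single_le_sum (f := fun M =>
      ∑ σ : β M with Vd M σ, if Ev M σ a then w a else 0)
      (fun M _ => sum_nonneg fun τ _ => hnn M τ) hM)
    refine le_trans ?_ (single_le_sum (f := fun σ : β M => if Ev M σ a then w a else 0)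
      (fun τ _ => hnn M τ) (mem_filter.2 ⟨mem_univ σ, hσ⟩))
    simp only [if_pos hev, le_refl]
  refine (sum_le_sum hG).trans (le_of_eq ?_)
  rw [sum_comm]
  refine sum_congr rfl fun M _ => ?_
  rw [sum_comm]

set_option maxHeartbeats 400000 in
/-- Graphs without induced `C₅` and without linear homogeneous sets have exponentially smaller weight
than `exp (-α n² / 4)`: a union bound over the certificates. A certificate has probability at most
`exp (-n² (α / 4 + δ₀ / 8))`, and `γ`, `y` are chosen such that the number of certificates costs at
most `δ₀ / 16` of this. -/
theorem bad_weight_le {p : ℝ} (hp0 : 0 < p) (hp : p ≤ 1 / 2) :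
    ∃ δ : ℝ, 0 < δ ∧ ∃ η : ℝ, 0 < η ∧ ∀ᶠ n : ℕ in Filter.atTop,
      ∑ G ∈ badGraphs n η, bernWt p (⊤ : SimpleGraph (Fin n)).edgeFinset G.edgeFinset ≤
        Real.exp (-(n : ℝ) ^ 2 * (-Real.log (1 - p) / 4 + δ)) := by
  set α := -Real.log (1 - p) with hα
  set δ₀ := p ^ 6 / 256 with hδ₀
  have hδ0 : 0 < δ₀ := by positivity
  have hδ1 : δ₀ ≤ 1 := by
    have : p ^ 6 ≤ 1 := pow_le_one₀ hp0.le (by linarith)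
    rw [hδ₀]; linarith
  set y := δ₀ / 64 with hy
  have hy0 : 0 < y := by positivity
  have hy1 : y < 1 := by rw [hy]; linarith
  have hly : 0 < -Real.log y := by linarith [Real.log_neg hy0 hy1]
  set γ := min (1 / 4) (δ₀ / (128 * (-Real.log y))) with hγ
  have hγ0 : 0 < γ := lt_min (by norm_num) (by positivity)
  have hγ2 : 2 * γ * (-Real.log y) ≤ δ₀ / 64 := by
    have : γ ≤ δ₀ / (128 * (-Real.log y)) := min_le_right _ _
    rw [le_div_iff₀ (by positivity)] at this
    linarith
  obtain ⟨l, hl⟩ := exists_nat_gt (16 / δ₀)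
  have hl0 : (0 : ℝ) < l := lt_trans (by positivity) hl
  have hl2 : 1 / (2 * (l : ℝ)) ≤ δ₀ / 32 := by
    rw [div_lt_iff₀ hδ0] at hl
    rw [div_le_div_iff₀ (by positivity) (by norm_num)]
    linarith
  obtain ⟨L, hL, η, hη, n₁, hcert⟩ := exists_cert hγ0 (min_le_left _ _)
    (show 0 < δ₀ / 32 by positivity) (l := l) (by exact_mod_cast hl0)
  set θ := δ₀ / 64 with hθ
  refine ⟨δ₀ / 16, by positivity, η, hη, ?_⟩
  filter_upwards [Filter.eventually_ge_atTop n₁, Filter.eventually_ge_atTop (112 * L),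
    (tendsto_natCast_atTop_atTop (R := ℝ)).eventually_ge_atTop (L / θ),
    eventually_lower_order (Real.log (L + 1) + Real.log (2 ^ (3 * L ^ 2 + L))) (Real.log L) 1
      (show 0 < δ₀ / 32 by positivity)] with n hn1 hn2 hn3 hn4
  have hnpos : 0 < n := by omega
  have hn0 : (0 : ℝ) < n := by exact_mod_cast hnpos
  have hθ0 : 0 < θ := by positivity
  rw [div_le_iff₀ hθ0] at hn3
  set E := (⊤ : SimpleGraph (Fin n)).edgeFinset with hE
  set K := ⌊2 * γ * (n : ℝ) ^ 2⌋₊ with hK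
  have hw : ∀ S, 0 ≤ bernWt p E S := fun S => bernWt_nonneg hp0.le (by linarith) _ _
  set X := Real.exp (-(n : ℝ) ^ 2 * (α / 4 + δ₀ / 8)) with hX
  set Y := ((L : ℝ) * n) ^ n * 2 ^ (3 * L ^ 2 + L) *
    Real.exp (y * n ^ 2 + K * (-Real.log y)) with hY
  have hstep : ∑ G ∈ badGraphs n η, bernWt p E G.edgeFinset ≤
      ∑ M ∈ Icc l L, ∑ σ : Cert n M (n / (14 * M)) K with σ.Valid (δ₀ / 32),
        ∑ G ∈ badGraphs n η, if σ.Ev G.edgeFinset then bernWt p E G.edgeFinset else 0 := by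
    refine sum_le_union (β := fun M => Cert n M (n / (14 * M)) K) (badGraphs n η)
      (fun G => bernWt p E G.edgeFinset) (fun G => hw _) (Icc l L)
      (fun M σ => σ.Valid (δ₀ / 32)) (fun M σ G => σ.Ev G.edgeFinset) fun G hG => ?_
    obtain ⟨-, h1, h2⟩ := mem_filter.1 hG
    obtain ⟨M, hlM, hML, σ, hσ, hev⟩ := hcert n hn1 G h1 h2
    exact ⟨M, mem_Icc.2 ⟨hlM, hML⟩, σ, hσ, hev⟩
  have hcell : ∀ M ∈ Icc l L, (∑ σ : Cert n M (n / (14 * M)) K with σ.Valid (δ₀ / 32),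
        ∑ G ∈ badGraphs n η, if σ.Ev G.edgeFinset then bernWt p E G.edgeFinset else 0) ≤
        Y * X := by
    intro M hM
    obtain ⟨hlM, hML⟩ := mem_Icc.1 hM
    have hlM' : (l : ℝ) ≤ M := by exact_mod_cast hlM
    have hML' : (M : ℝ) ≤ L := by exact_mod_cast hML
    have hσ : ∀ σ ∈ ({σ | σ.Valid (δ₀ / 32)} : Finset (Cert n M (n / (14 * M)) K)),
        (∑ G ∈ badGraphs n η, if σ.Ev G.edgeFinset then bernWt p E G.edgeFinset else 0) ≤ X := by
      intro σ hσ
      have hσ := (mem_filter.1 hσ).2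
      refine (sum_graph_le hp0.le (by linarith) _ σ.Ev).trans
        ((sum_ev_le hp0 hp σ hσ).trans ?_)
      refine event_bound (θ := θ) hp0 hp hα σ hσ hl0 hlM' (by positivity) hθ0.le ?_ ?_ ?_ ?_
      · rw [← hδ₀, hθ]; linarith
      · rw [hθ]; linarith
      · linarith
      · exact le_trans (Nat.mul_le_mul_left _ hML) hn2
    have hcard : (Fintype.card (Cert n M (n / (14 * M)) K) : ℝ) ≤ Y := by
      refine (card_cert_le hnpos ?_ hy0 hy1.le).trans ?_
      · have := Nat.div_mul_le_self n (14 * M)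
        calc 7 * (n / (14 * M)) * M ≤ 2 * (7 * (n / (14 * M)) * M) := by omega
          _ = n / (14 * M) * (14 * M) := by ring
          _ ≤ n := this
      · rw [hY]; gcongr; norm_num
    calc _ ≤ ∑ σ : Cert n M (n / (14 * M)) K with σ.Valid (δ₀ / 32), X := sum_le_sum hσ
      _ = (#({σ | σ.Valid (δ₀ / 32)} : Finset (Cert n M (n / (14 * M)) K)) : ℝ) * X := by
          rw [sum_const, nsmul_eq_mul]
      _ ≤ Y * X := by
          gcongr
          refine le_trans ?_ hcard
          exact_mod_cast card_le_univ _
  have hfin : ((L : ℝ) + 1) * (Y * X) ≤ Real.exp (-(n : ℝ) ^ 2 * (α / 4 + δ₀ / 16)) := by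
    have hL0 : (0 : ℝ) < L := by exact_mod_cast hL
    have e1 : (L : ℝ) + 1 = Real.exp (Real.log (L + 1)) := by rw [Real.exp_log (by positivity)]
    have e2 : ((L : ℝ) * n) ^ n = Real.exp (n * (Real.log L + Real.log n)) := by
      rw [← Real.log_mul hL0.ne' hn0.ne', Real.exp_nat_mul, Real.exp_log (by positivity)]
    have e3 : (2 : ℝ) ^ (3 * L ^ 2 + L) = Real.exp (Real.log (2 ^ (3 * L ^ 2 + L))) := by
      rw [Real.exp_log (by positivity)]
    have e4 : (K : ℝ) * (-Real.log y) ≤ δ₀ / 64 * n ^ 2 := by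
      have : (K : ℝ) ≤ 2 * γ * (n : ℝ) ^ 2 := Nat.floor_le (by positivity)
      calc (K : ℝ) * (-Real.log y) ≤ 2 * γ * (n : ℝ) ^ 2 * (-Real.log y) := by gcongr
        _ = 2 * γ * (-Real.log y) * n ^ 2 := by ring
        _ ≤ _ := by gcongr
    rw [hY, hX, e2, e3, e1]
    simp only [← Real.exp_add]
    rw [Real.exp_le_exp]
    have : y * (n : ℝ) ^ 2 = δ₀ / 64 * n ^ 2 := by rw [hy]
    nlinarith
  calc _ ≤ _ := hstep
    _ ≤ ∑ M ∈ Icc l L, Y * X := sum_le_sum hcell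
    _ = (#(Icc l L) : ℝ) * (Y * X) := by rw [sum_const, nsmul_eq_mul]
    _ ≤ ((L : ℝ) + 1) * (Y * X) := by
        have : #(Icc l L) ≤ L + 1 := by rw [Nat.card_Icc]; omega
        have h2 : (#(Icc l L) : ℝ) ≤ (L : ℝ) + 1 := by exact_mod_cast this
        have : 0 ≤ Y * X := by positivity
        gcongr
    _ ≤ _ := hfin

/-! ### A large family of graphs without induced `C₅` -/

/-- The graphs with `m` edges and no induced `C₅`. -/
noncomputable def forbGraphs (n m : ℕ) : Finset (SimpleGraph (Fin n)) :=
  univ.filter fun G => ¬ HasInducedC5 G ∧ edgeCount G = m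

lemma edgeCount_eq {n : ℕ} (G : SimpleGraph (Fin n)) : edgeCount G = #G.edgeFinset := by
  rw [edgeCount, Nat.card_eq_fintype_card, ← edgeFinset_card]

/-- With the vertices below `n / 2` isolated, the first `b` of the remaining ones form a clique
and are joined to all the others, which form an independent set. -/
def coreGraph (n b : ℕ) : SimpleGraph (Fin n) where
  Adj x y := x ≠ y ∧ n / 2 ≤ x.1 ∧ n / 2 ≤ y.1 ∧ (x.1 < n / 2 + b ∨ y.1 < n / 2 + b)
  symm := ⟨fun _ _ h => ⟨h.1.symm, h.2.2.1, h.2.1, h.2.2.2.symm⟩⟩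
  loopless := ⟨fun _ h => h.1 rfl⟩

lemma coreGraph_adj {n b : ℕ} {x y : Fin n} : (coreGraph n b).Adj x y ↔
    x ≠ y ∧ n / 2 ≤ x.1 ∧ n / 2 ≤ y.1 ∧ (x.1 < n / 2 + b ∨ y.1 < n / 2 + b) := Iff.rfl

/-- The pairs with one vertex below `n / 2` and the other not. -/
noncomputable def crossEdges (n : ℕ) : Finset (Sym2 (Fin n)) :=
  ((univ.filter fun x : Fin n => x.1 < n / 2) ×ˢ (univ.filter fun x : Fin n => n / 2 ≤ x.1)).image
    fun z => s(z.1, z.2)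

lemma mem_crossEdges {n : ℕ} {x y : Fin n} : s(x, y) ∈ crossEdges n ↔
    (x.1 < n / 2 ∧ n / 2 ≤ y.1) ∨ (y.1 < n / 2 ∧ n / 2 ≤ x.1) := by
  simp only [crossEdges, mem_image, mem_product, mem_filter, mem_univ, true_and, Prod.exists]
  constructor
  · rintro ⟨a, b, h, he⟩
    rcases Sym2.eq_iff.1 he with ⟨rfl, rfl⟩ | ⟨rfl, rfl⟩
    · exact Or.inl h
    · exact Or.inr h
  · rintro (h | h)
    · exact ⟨x, y, h, rfl⟩
    · exact ⟨y, x, h, Sym2.eq_swap⟩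

lemma card_lower_half (n : ℕ) : #(univ.filter fun x : Fin n => x.1 < n / 2) = n / 2 := by
  rw [Fin.card_filter_val_lt, min_eq_right (Nat.div_le_self _ _)]

lemma card_upper_half (n : ℕ) : #(univ.filter fun x : Fin n => n / 2 ≤ x.1) = n - n / 2 := by
  have h := card_filter_add_card_filter_not (s := (univ : Finset (Fin n))) (fun x => x.1 < n / 2)
  have h2 := card_lower_half n
  simp only [not_lt, card_univ, Fintype.card_fin] at h
  omega

lemma card_crossEdges (n : ℕ) : #(crossEdges n) = n / 2 * (n - n / 2) := by
  rw [crossEdges, card_image_of_injOn, card_product, card_lower_half, card_upper_half]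
  rintro ⟨x, y⟩ h ⟨x', y'⟩ h' he
  simp only [coe_product, coe_filter, mem_univ, true_and, Set.mem_prod, Set.mem_ofPred_eq] at h h'
  rcases Sym2.eq_iff.1 he with ⟨rfl, rfl⟩ | ⟨rfl, rfl⟩
  · rfl
  · dsimp only at h h'
    omega

/-- The core graph together with the cross edges in `T`. -/
noncomputable def glued (n b : ℕ) (T : Finset (Sym2 (Fin n))) : SimpleGraph (Fin n) :=
  fromEdgeSet ↑((coreGraph n b).edgeFinset ∪ T)

lemma core_disjoint_cross (n b : ℕ) : Disjoint (coreGraph n b).edgeFinset (crossEdges n) := by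
  rw [Finset.disjoint_left]
  intro e
  induction e using Sym2.ind with
  | _ x y =>
    rw [mem_edgeFinset, SimpleGraph.mem_edgeSet, coreGraph_adj, mem_crossEdges]
    omega

lemma edgeFinset_glued {n b : ℕ} {T : Finset (Sym2 (Fin n))} (hT : T ⊆ crossEdges n) :
    (glued n b T).edgeFinset = (coreGraph n b).edgeFinset ∪ T := by
  ext e
  rw [mem_edgeFinset, glued, edgeSet_fromEdgeSet]
  simp only [Set.mem_sdiff, mem_coe, and_iff_left_iff_imp]
  intro he
  induction e using Sym2.ind with
  | _ x y =>
    have hne : x ≠ y := by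
      rcases mem_union.1 he with h | h
      · rw [mem_edgeFinset, SimpleGraph.mem_edgeSet, coreGraph_adj] at h
        exact h.1
      · have := mem_crossEdges.1 (hT h)
        rintro rfl
        omega
    simpa using hne

lemma glued_adj {n b : ℕ} {T : Finset (Sym2 (Fin n))} (hT : T ⊆ crossEdges n) {x y : Fin n} :
    (glued n b T).Adj x y ↔ (coreGraph n b).Adj x y ∨ s(x, y) ∈ T := by
  rw [← SimpleGraph.mem_edgeSet, ← mem_edgeFinset, edgeFinset_glued hT, mem_union, mem_edgeFinset,
    SimpleGraph.mem_edgeSet]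

/-- The lower half is independent, so at most two vertices of an induced `C₅` lie in it, and the
others include an edge and a vertex joined to neither end; but in the core graph one end of each
edge is joined to the whole upper half. -/
lemma glued_not_C5 {n b : ℕ} {T : Finset (Sym2 (Fin n))} (hT : T ⊆ crossEdges n) :
    ¬ HasInducedC5 (glued n b T) := by
  rintro ⟨φ⟩
  have hadj : ∀ i j, (glued n b T).Adj (φ i) (φ j) ↔ (cycleGraph 5).Adj i j :=
    fun i j => φ.map_rel_iff
  have h1 : ∀ i j, (cycleGraph 5).Adj i j → ¬ ((φ i).1 < n / 2 ∧ (φ j).1 < n / 2) := by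
    intro i j hij h
    rw [← hadj, glued_adj hT, coreGraph_adj] at hij
    rcases hij with hij | hij
    · omega
    · have := mem_crossEdges.1 (hT hij); omega
  have hup : ∀ i j, n / 2 ≤ (φ i).1 → n / 2 ≤ (φ j).1 →
      ((cycleGraph 5).Adj i j ↔ (coreGraph n b).Adj (φ i) (φ j)) := by
    intro i j hi hj
    rw [← hadj, glued_adj hT]
    refine or_iff_left fun h => ?_
    have := mem_crossEdges.1 (hT h); omega
  have h2 : ∀ i j k, (cycleGraph 5).Adj i j → ¬ (cycleGraph 5).Adj i k →
      ¬ (cycleGraph 5).Adj j k → i ≠ k → j ≠ k →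
      ¬ (n / 2 ≤ (φ i).1 ∧ n / 2 ≤ (φ j).1 ∧ n / 2 ≤ (φ k).1) := by
    rintro i j k hij hik hjk nik njk ⟨hi, hj, hk⟩
    rw [hup i j hi hj, coreGraph_adj] at hij
    rw [hup i k hi hk, coreGraph_adj] at hik
    rw [hup j k hj hk, coreGraph_adj] at hjk
    have e1 : φ i ≠ φ k := fun h => nik (φ.injective h)
    have e2 : φ j ≠ φ k := fun h => njk (φ.injective h)
    have k1 : ¬ ((φ i).1 < n / 2 + b ∨ (φ k).1 < n / 2 + b) := fun h => hik ⟨e1, hi, hk, h⟩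
    have k2 : ¬ ((φ j).1 < n / 2 + b ∨ (φ k).1 < n / 2 + b) := fun h => hjk ⟨e2, hj, hk, h⟩
    have := hij.2.2.2
    omega
  have a01 := h1 0 1 (by decide)
  have a12 := h1 1 2 (by decide)
  have a23 := h1 2 3 (by decide)
  have a34 := h1 3 4 (by decide)
  have a40 := h1 4 0 (by decide)
  have b0 := h2 0 1 3 (by decide) (by decide) (by decide) (by decide) (by decide)
  have b1 := h2 1 2 4 (by decide) (by decide) (by decide) (by decide) (by decide)
  have b2 := h2 2 3 0 (by decide) (by decide) (by decide) (by decide) (by decide)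
  have b3 := h2 3 4 1 (by decide) (by decide) (by decide) (by decide) (by decide)
  have b4 := h2 4 0 2 (by decide) (by decide) (by decide) (by decide) (by decide)
  omega

/-- Choosing any `j` cross edges gives different graphs, none with an induced `C₅`. -/
lemma choose_le_forb (n b j : ℕ) : (n / 2 * (n - n / 2)).choose j ≤
    #(forbGraphs n (#(coreGraph n b).edgeFinset + j)) := by
  rw [← card_crossEdges, ← card_powersetCard]
  refine card_le_card_of_injOn (glued n b) ?_ ?_
  · intro T hT
    obtain ⟨hT, hc⟩ := mem_powersetCard.1 (mem_coe.1 hT)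
    refine mem_filter.2 ⟨mem_univ _, glued_not_C5 hT, ?_⟩
    rw [edgeCount_eq, edgeFinset_glued hT, card_union_of_disjoint
      (disjoint_of_subset_right hT (core_disjoint_cross n b)), hc]
  · intro T hT T' hT' h
    obtain ⟨hT, -⟩ := mem_powersetCard.1 (mem_coe.1 hT)
    obtain ⟨hT', -⟩ := mem_powersetCard.1 (mem_coe.1 hT')
    have he : (glued n b T).edgeFinset = (glued n b T').edgeFinset := by
      rw [edgeFinset_inj]; exact h
    rw [edgeFinset_glued hT, edgeFinset_glued hT'] at he
    have key : ∀ R R' : Finset (Sym2 (Fin n)), R ⊆ crossEdges n →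
        (coreGraph n b).edgeFinset ∪ R = (coreGraph n b).edgeFinset ∪ R' → R ⊆ R' := by
      intro R R' hR hRR e heR
      have : e ∈ (coreGraph n b).edgeFinset ∪ R' := hRR ▸ mem_union_right _ heR
      rcases mem_union.1 this with h | h
      · exact absurd (hR heR) (Finset.disjoint_left.1 (core_disjoint_cross n b) h)
      · exact h
    exact Subset.antisymm (key T T' hT he) (key T' T hT' he.symm)

lemma core_zero (n : ℕ) : #(coreGraph n 0).edgeFinset = 0 := by
  rw [card_eq_zero, edgeFinset_eq_empty]
  ext x y
  simp only [coreGraph_adj, bot_adj, iff_false]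
  omega

lemma core_succ (n b : ℕ) :
    #(coreGraph n (b + 1)).edgeFinset ≤ #(coreGraph n b).edgeFinset + n := by
  by_cases hb : n / 2 + b < n
  · have hsub : (coreGraph n (b + 1)).edgeFinset ⊆
        (coreGraph n b).edgeFinset ∪ univ.image fun y : Fin n => s(⟨n / 2 + b, hb⟩, y) := by
      intro e
      induction e using Sym2.ind with
      | _ x y =>
        intro h
        rw [mem_edgeFinset, SimpleGraph.mem_edgeSet, coreGraph_adj] at h
        rw [mem_union, mem_edgeFinset, SimpleGraph.mem_edgeSet, coreGraph_adj, mem_image]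
        by_cases hx : x.1 = n / 2 + b
        · exact Or.inr ⟨y, mem_univ _, by congr; exact hx.symm⟩
        by_cases hy : y.1 = n / 2 + b
        · refine Or.inr ⟨x, mem_univ _, ?_⟩
          rw [Sym2.eq_swap]
          congr; exact hy.symm
        · left
          refine ⟨h.1, h.2.1, h.2.2.1, ?_⟩
          have := h.2.2.2
          omega
    refine (card_le_card hsub).trans ((card_union_le _ _).trans ?_)
    gcongr
    exact card_image_le.trans (by simp)
  · refine le_add_right (card_le_card ?_)
    rw [edgeFinset_subset_edgeFinset]
    intro x y h
    rw [coreGraph_adj] at h ⊢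
    have := x.2
    have := y.2
    omega

/-- For `b = n` the core graph is the complete graph on the upper half. -/
lemma core_full (n : ℕ) : (n - n / 2).choose 2 ≤ #(coreGraph n n).edgeFinset := by
  rw [← card_upper_half n, ← Sym2.card_image_offDiag]
  refine card_le_card ?_
  intro e he
  obtain ⟨⟨x, y⟩, hz, rfl⟩ := mem_image.1 he
  simp only [mem_offDiag, mem_filter, mem_univ, true_and] at hz
  rw [mem_edgeFinset]
  show (coreGraph n n).Adj x y
  rw [coreGraph_adj]
  exact ⟨hz.2.2, hz.1, hz.2.1, Or.inl (by have := x.2; omega)⟩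

/-- Since increasing `b` by one adds at most `n` edges, the edge numbers of core graphs have gaps at
most `n`. -/
lemma exists_core {n τ : ℕ} (hτ : τ ≤ (n - n / 2).choose 2 + n) :
    ∃ b, #(coreGraph n b).edgeFinset ≤ τ ∧ τ ≤ #(coreGraph n b).edgeFinset + n := by
  have key : ∀ B, τ ≤ #(coreGraph n B).edgeFinset + n →
      ∃ b, #(coreGraph n b).edgeFinset ≤ τ ∧ τ ≤ #(coreGraph n b).edgeFinset + n := by
    intro B
    induction B with
    | zero => intro h; exact ⟨0, by rw [core_zero]; omega, h⟩
    | succ B ih =>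
      intro h
      by_cases h1 : #(coreGraph n (B + 1)).edgeFinset ≤ τ
      · exact ⟨B + 1, h1, h⟩
      · have := core_succ n B
        exact ih (by omega)
  exact key n (hτ.trans (by have := core_full n; omega))

/-! ### Lower bounds for binomial probabilities -/

/-- The `i`-th term in the binomial expansion of `(j + k) ^ (j + k)`. -/
def binTerm (j k i : ℕ) : ℕ := j ^ i * k ^ (j + k - i) * (j + k).choose i

lemma binTerm_le_succ {j k i : ℕ} (h : i < j) : binTerm j k i ≤ binTerm j k (i + 1) := by
  have h1 := Nat.choose_succ_right_eq (j + k) i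
  obtain ⟨r, hr⟩ : ∃ r, j + k - i = r + 1 := ⟨j + k - i - 1, by omega⟩
  have h2 : j + k - (i + 1) = r := by omega
  rw [hr] at h1
  rw [binTerm, binTerm, hr, h2, pow_succ, pow_succ]
  refine Nat.le_of_mul_le_mul_right ?_ (show 0 < i + 1 by omega)
  calc j ^ i * (k ^ r * k) * (j + k).choose i * (i + 1)
      = j ^ i * k ^ r * (j + k).choose i * (k * (i + 1)) := by ring
    _ ≤ j ^ i * k ^ r * (j + k).choose i * (j * (r + 1)) := by
        refine Nat.mul_le_mul_left _ ?_
        have h3 : r + 1 = k + (j - i) := by omega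
        obtain ⟨s, rfl⟩ : ∃ s, j = i + 1 + s := ⟨j - (i + 1), by omega⟩
        have h4 : r + 1 = k + (s + 1) := by omega
        rw [h4]; nlinarith
    _ = j ^ i * j * k ^ r * (j + k).choose i * (r + 1) := by ring
    _ = j ^ i * j * k ^ r * (j + k).choose (i + 1) * (i + 1) := by
        rw [mul_assoc _ _ (r + 1), ← h1]; ring

lemma binTerm_le_left {j k i : ℕ} (h : i ≤ j) : binTerm j k i ≤ binTerm j k j := by
  induction h using Nat.decreasingInduction with
  | self => rfl
  | of_succ i hi ih => exact (binTerm_le_succ hi).trans ih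

lemma binTerm_symm {j k i : ℕ} (h : i ≤ j + k) : binTerm j k i = binTerm k j (j + k - i) := by
  rw [binTerm, binTerm, add_comm k j, Nat.choose_symm h, Nat.sub_sub_self h]
  ring

/-- The expansion of `(j + k) ^ (j + k)` has its largest term at the index `j`. -/
lemma binTerm_le {j k i : ℕ} (h : i ≤ j + k) : binTerm j k i ≤ binTerm j k j := by
  rcases le_total i j with hij | hij
  · exact binTerm_le_left hij
  · rw [binTerm_symm h, binTerm_symm (Nat.le_add_right j k), Nat.add_sub_cancel_left]
    exact binTerm_le_left (by omega)

/-- The largest of the `j + k + 1` terms of the binomial expansion is at least their average. -/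
lemma pow_le_choose_mul (j k : ℕ) :
    (j + k) ^ (j + k) ≤ (j + k + 1) * (j ^ j * k ^ k * (j + k).choose j) := by
  conv_lhs => rw [add_pow]
  refine (sum_le_card_nsmul _ _ (binTerm j k j) fun i hi => ?_).trans_eq ?_
  · exact binTerm_le (by have := mem_range.1 hi; omega)
  · rw [card_range, smul_eq_mul, binTerm, Nat.add_sub_cancel_left]

/-- This is `log (j / a) ≤ j / a - 1`, raised to the power `j`. -/
lemma pow_mul_exp_le {a : ℝ} (ha : 0 < a) (j : ℕ) :
    (j : ℝ) ^ j * Real.exp (j - (j : ℝ) ^ 2 / a) ≤ a ^ j := by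
  rcases Nat.eq_zero_or_pos j with rfl | hj
  · simp
  have hj' : (0 : ℝ) < j := by exact_mod_cast hj
  have h1 : Real.exp (1 - j / a) ≤ a / j := by
    rw [← Real.le_log_iff_exp_le (by positivity)]
    have := Real.one_sub_inv_le_log_of_pos (show 0 < a / j by positivity)
    rwa [inv_div] at this
  have h2 : Real.exp (j - (j : ℝ) ^ 2 / a) = Real.exp (1 - j / a) ^ j := by
    rw [← Real.exp_nat_mul]; congr 1; field_simp
  rw [h2, ← mul_pow]
  refine pow_le_pow_left₀ (by positivity) ?_ _
  calc (j : ℝ) * Real.exp (1 - j / a) ≤ j * (a / j) := by gcongr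
    _ = a := by field_simp

/-- A lower bound for the probability that a binomial variable takes a value near its mean. -/
lemma binom_lower {p : ℝ} (hp0 : 0 < p) (hp1 : p < 1) {N j : ℕ} (hj : j ≤ N) (hN : 0 < N) :
    Real.exp (-((j : ℝ) - p * N) ^ 2 / (p * (1 - p) * N)) / (N + 1) ≤
      N.choose j * (p ^ j * (1 - p) ^ (N - j)) := by
  obtain ⟨k, rfl⟩ := Nat.exists_eq_add_of_le hj
  rw [Nat.add_sub_cancel_left]
  have hq : 0 < 1 - p := by linarith
  set M : ℝ := ((j + k : ℕ) : ℝ) with hM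
  have hMp : 0 < M := by rw [hM]; exact_mod_cast hN
  have hMe : M = j + k := by rw [hM]; push_cast; rfl
  have h1 := pow_mul_exp_le (mul_pos hp0 hMp) j
  have h2 := pow_mul_exp_le (mul_pos hq hMp) k
  have h3 : M ^ (j + k) ≤ (M + 1) * ((j : ℝ) ^ j * (k : ℝ) ^ k * (j + k).choose j) := by
    rw [hM]; exact_mod_cast pow_le_choose_mul j k
  have hjj : (0 : ℝ) < (j : ℝ) ^ j := by
    rcases Nat.eq_zero_or_pos j with rfl | h
    · simp
    · positivity
  have hkk : (0 : ℝ) < (k : ℝ) ^ k := by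
    rcases Nat.eq_zero_or_pos k with rfl | h
    · simp
    · positivity
  have h4 := mul_le_mul h1 h2 (by positivity) (by positivity)
  have hexp : Real.exp (j - (j : ℝ) ^ 2 / (p * M)) * Real.exp (k - (k : ℝ) ^ 2 / ((1 - p) * M)) =
      Real.exp (-((j : ℝ) - p * M) ^ 2 / (p * (1 - p) * M)) := by
    rw [← Real.exp_add]
    congr 1
    have hk : (k : ℝ) = M - j := by linarith
    rw [hk]
    field_simp
    ring
  rw [div_le_iff₀ (by positivity), ← hexp]
  refine le_of_mul_le_mul_left ?_ (mul_pos hjj hkk)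
  calc (j : ℝ) ^ j * (k : ℝ) ^ k * (Real.exp (j - (j : ℝ) ^ 2 / (p * M)) *
        Real.exp (k - (k : ℝ) ^ 2 / ((1 - p) * M)))
      ≤ (p * M) ^ j * ((1 - p) * M) ^ k := by linarith
    _ = p ^ j * (1 - p) ^ k * M ^ (j + k) := by rw [mul_pow, mul_pow, pow_add]; ring
    _ ≤ p ^ j * (1 - p) ^ k * ((M + 1) * ((j : ℝ) ^ j * (k : ℝ) ^ k * (j + k).choose j)) := by
        gcongr
    _ = _ := by ring

/-! ### Splitting the number of edges -/

lemma half_mul_bounds (n : ℕ) : 4 * (n / 2 * (n - n / 2)) ≤ n ^ 2 ∧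
    n ^ 2 ≤ 4 * (n / 2 * (n - n / 2)) + 1 := by
  rcases Nat.even_or_odd' n with ⟨k, rfl | rfl⟩
  · have h1 : 2 * k / 2 = k := by omega
    have h2 : 2 * k - k = k := by omega
    rw [h1, h2]; constructor <;> nlinarith
  · have h1 : (2 * k + 1) / 2 = k := by omega
    have h2 : 2 * k + 1 - k = k + 1 := by omega
    rw [h1, h2]; constructor <;> nlinarith

lemma two_mul_choose_two (n : ℕ) : 2 * (n.choose 2 : ℝ) = (n : ℝ) ^ 2 - n := by
  rw [Nat.cast_choose_two]; ring

lemma choose_half_lower {n : ℕ} (hn : 2 ≤ n) :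
    (n : ℝ) ^ 2 - 2 * n ≤ 8 * ((n - n / 2).choose 2 : ℝ) := by
  have h := two_mul_choose_two (n - n / 2)
  have h1 : (n : ℝ) ≤ 2 * ((n - n / 2 : ℕ) : ℝ) := by exact_mod_cast (by omega : n ≤ 2 * (n - n / 2))
  have h2 : (2 : ℝ) ≤ n := by exact_mod_cast hn
  nlinarith

/-- If `p = min (2c) (1/2)`, then any `m` close to `c * n.choose 2` can be written as the number
of edges of a core graph plus a number `j` close to `p` times the number of cross pairs. The core
graph is empty unless `p = 1/2`. -/
lemma exists_split {c : ℝ} (hc0 : 0 < c) (hc : c ≤ 1 / 2) {n m : ℕ} (hn : 12 ≤ n)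
    (hm : |(m : ℝ) - c * n.choose 2| ≤ 1) :
    ∃ b j, #(coreGraph n b).edgeFinset + j = m ∧
      (#(coreGraph n b).edgeFinset = 0 ∨ min (2 * c) (1 / 2) = 1 / 2) ∧
      |(j : ℝ) - min (2 * c) (1 / 2) * ((n / 2 * (n - n / 2) : ℕ) : ℝ)| ≤ 2 * n ∧
      j ≤ n / 2 * (n - n / 2) := by
  obtain ⟨hN1, hN2⟩ := half_mul_bounds n
  have hK := choose_half_lower (n := n) (by omega)
  generalize hNdef : n / 2 * (n - n / 2) = N at *
  have hW := two_mul_choose_two n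
  generalize (n.choose 2 : ℝ) = W at *
  have hN1r : 4 * (N : ℝ) ≤ (n : ℝ) ^ 2 := by exact_mod_cast hN1
  have hN2r : (n : ℝ) ^ 2 ≤ 4 * (N : ℝ) + 1 := by exact_mod_cast hN2
  have hnr : (12 : ℝ) ≤ n := by exact_mod_cast hn
  have hsq : 12 * (n : ℝ) ≤ (n : ℝ) ^ 2 := by nlinarith
  obtain ⟨hm1, hm2⟩ := abs_le.1 hm
  have hWpos : 0 ≤ W := by linarith
  rcases lt_or_ge c (1 / 4) with h4 | h4
  · have hmin : min (2 * c) (1 / 2) = 2 * c := min_eq_left (by linarith)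
    have hcW : c * W ≤ 1 / 4 * W := by gcongr
    refine ⟨0, m, by rw [core_zero, zero_add], Or.inl (core_zero n), ?_, ?_⟩
    · rw [hmin]
      have e : (m : ℝ) - 2 * c * N = (m - c * W) - c * (2 * N - W) := by ring
      have l1 : 0 ≤ c * (2 * N - W) := mul_nonneg hc0.le (by linarith)
      have l2 : c * (2 * N - W) ≤ 1 / 4 * (2 * N - W) := by
        gcongr; linarith
      rw [e, abs_le]
      constructor <;> linarith
    · have : (m : ℝ) ≤ N := by linarith
      exact_mod_cast this
  · have hmin : min (2 * c) (1 / 2) = 1 / 2 := min_eq_right (by linarith)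
    have hcW1 : 1 / 4 * W ≤ c * W := by gcongr
    have hcW2 : c * W ≤ 1 / 2 * W := by gcongr
    have hh1 : 2 * ((N / 2 : ℕ) : ℝ) ≤ N := by exact_mod_cast (by omega : 2 * (N / 2) ≤ N)
    have hh2 : (N : ℝ) ≤ 2 * ((N / 2 : ℕ) : ℝ) + 1 := by
      exact_mod_cast (by omega : N ≤ 2 * (N / 2) + 1)
    have hτ : m - N / 2 ≤ (n - n / 2).choose 2 + n := by
      rw [Nat.sub_le_iff_le_add]
      have : (m : ℝ) ≤ ((n - n / 2).choose 2 : ℝ) + n + ((N / 2 : ℕ) : ℝ) := by linarith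
      exact_mod_cast this
    obtain ⟨b, hb1, hb2⟩ := exists_core hτ
    refine ⟨b, m - #(coreGraph n b).edgeFinset, ?_⟩
    generalize #(coreGraph n b).edgeFinset = e at *
    have hem : e ≤ m := by omega
    have hup : m - e ≤ N / 2 + n := by omega
    have hupr : ((m - e : ℕ) : ℝ) ≤ ((N / 2 : ℕ) : ℝ) + n := by exact_mod_cast hup
    have hlow : (N : ℝ) / 2 - 2 * n ≤ ((m - e : ℕ) : ℝ) := by
      rcases le_total (N / 2) m with h | h
      · have : ((N / 2 : ℕ) : ℝ) ≤ ((m - e : ℕ) : ℝ) := by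
          exact_mod_cast (by omega : N / 2 ≤ m - e)
        linarith
      · have : m - e = m := by omega
        rw [this]
        linarith
    refine ⟨by omega, Or.inr hmin, ?_, ?_⟩
    · rw [hmin, abs_le]
      constructor <;> linarith
    · have : ((m - e : ℕ) : ℝ) ≤ N := by linarith
      exact_mod_cast this

/-! ### The case `c ≤ 1/2` -/

lemma card_top_edges (n : ℕ) : #(⊤ : SimpleGraph (Fin n)).edgeFinset = n.choose 2 := by
  rw [card_edgeFinset_top_eq_card_choose_two, Fintype.card_fin]

/-- Passing from the Bernoulli weight of a family of graphs to the number of its members with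
exactly `m` edges, all of which have the same weight. -/
lemma card_mul_weight_le {n m : ℕ} {p : ℝ} (hp0 : 0 ≤ p) (hp1 : p ≤ 1)
    (B : Finset (SimpleGraph (Fin n))) :
    (#(B.filter fun G => edgeCount G = m) : ℝ) * (p ^ m * (1 - p) ^ (n.choose 2 - m)) ≤
      ∑ G ∈ B, bernWt p (⊤ : SimpleGraph (Fin n)).edgeFinset G.edgeFinset := by
  rw [← nsmul_eq_mul, ← sum_const]
  refine le_trans (sum_le_sum fun G hG => ?_) (sum_le_sum_of_subset_of_nonneg
    (filter_subset (fun G => edgeCount G = m) B) fun G _ _ => bernWt_nonneg hp0 hp1 _ _)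
  rw [bernWt, card_top_edges, ← edgeCount_eq, (mem_filter.1 hG).2]

lemma edgeCount_le {n : ℕ} (G : SimpleGraph (Fin n)) : edgeCount G ≤ n.choose 2 := by
  rw [edgeCount_eq, ← card_top_edges]
  exact card_le_card (edgeFinset_subset_edgeFinset.2 le_top)

lemma pow_mul_pow_eq_exp {p : ℝ} (hp0 : 0 < p) (hp1 : p < 1) {a b : ℕ} (h : b ≤ a) :
    p ^ b * (1 - p) ^ (a - b) = Real.exp (b * Real.log p + (a - b) * Real.log (1 - p)) := by
  rw [Real.exp_add, ← Nat.cast_sub h, Real.exp_nat_mul, Real.exp_nat_mul, Real.exp_log hp0,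
    Real.exp_log (by linarith)]

/-- Comparison of the two exponents: the part of the core graph contributes nothing, as it is
empty or its edges and non-edges are equally likely, and `n.choose 2 - N ≤ n ^ 2 / 4`. -/
lemma exponent_compare {p : ℝ} (hp0 : 0 < p) (hp : p < 1) {W N e j n : ℝ}
    (he : e = 0 ∨ p = 1 / 2) (hWN : W - N ≤ n ^ 2 / 4) :
    j * Real.log p + (N - j) * Real.log (1 - p) - n ^ 2 * (-Real.log (1 - p) / 4) ≤
      (e + j) * Real.log p + (W - (e + j)) * Real.log (1 - p) := by
  have h1 : e * Real.log p = e * Real.log (1 - p) := by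
    rcases he with rfl | rfl
    · simp
    · norm_num
  have h2 : Real.log (1 - p) ≤ 0 := Real.log_nonpos (by linarith) (by linarith)
  nlinarith [mul_nonneg (sub_nonneg.2 hWN) (neg_nonneg.2 h2)]

lemma deviation_le {p : ℝ} (hp0 : 0 < p) (hp1 : p < 1) {x N n : ℝ} (hx : |x| ≤ 2 * n)
    (hN : n ^ 2 ≤ 8 * N) (hN0 : 0 < N) :
    -(32 / (p * (1 - p))) ≤ -x ^ 2 / (p * (1 - p) * N) := by
  have hq : 0 < 1 - p := by linarith
  have h1 : x ^ 2 ≤ 32 * N := by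
    have := pow_le_pow_left₀ (abs_nonneg x) hx 2
    rw [sq_abs] at this
    nlinarith
  rw [neg_div, neg_le_neg_iff, div_le_div_iff₀ (by positivity) (by positivity)]
  have : 0 < p * (1 - p) := by positivity
  nlinarith

/-- The main estimate for a fixed large `n` and a fixed number `m` of edges. -/
lemma ratio_bound {c p δ η : ℝ} (hc0 : 0 < c) (hc : c ≤ 1 / 2) (hpc : p = min (2 * c) (1 / 2))
    {n m : ℕ} (hn : 12 ≤ n) (hm : |(m : ℝ) - c * n.choose 2| ≤ 1)
    (hbad : ∑ G ∈ badGraphs n η, bernWt p (⊤ : SimpleGraph (Fin n)).edgeFinset G.edgeFinset ≤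
      Real.exp (-(n : ℝ) ^ 2 * (-Real.log (1 - p) / 4 + δ))) :
    (#((badGraphs n η).filter fun G => edgeCount G = m) : ℝ) ≤
      (n : ℝ) ^ 2 * Real.exp (32 / (p * (1 - p)) - δ * (n : ℝ) ^ 2) * #(forbGraphs n m) := by
  have hp0 : 0 < p := by rw [hpc]; exact lt_min (by linarith) (by norm_num)
  have hp2 : p ≤ 1 / 2 := by rw [hpc]; exact min_le_right _ _
  have hp1 : p < 1 := by linarith
  obtain ⟨b, j, hbj, he, hdev, hjN⟩ := exists_split hc0 hc hn hm
  rw [← hpc] at he hdev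
  have hforb := choose_le_forb n b j
  rw [hbj] at hforb
  obtain ⟨hN1, hN2⟩ := half_mul_bounds n
  have hW := two_mul_choose_two n
  have hmW : m ≤ n.choose 2 := by
    have hnr : (12 : ℝ) ≤ n := by exact_mod_cast hn
    have h1 := (abs_le.1 hm).2
    have h2 : c * (n.choose 2 : ℝ) ≤ 1 / 2 * n.choose 2 := by gcongr
    have : (m : ℝ) ≤ n.choose 2 := by nlinarith
    exact_mod_cast this
  have hcount := (card_mul_weight_le (m := m) hp0.le hp1.le (badGraphs n η)).trans hbad
  generalize #(coreGraph n b).edgeFinset = e at *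
  generalize n / 2 * (n - n / 2) = N at *
  generalize (badGraphs n η).filter (fun G => edgeCount G = m) = B at *
  have hnr : (12 : ℝ) ≤ n := by exact_mod_cast hn
  have hN1r : 4 * (N : ℝ) ≤ (n : ℝ) ^ 2 := by exact_mod_cast hN1
  have hN2r : (n : ℝ) ^ 2 ≤ 4 * (N : ℝ) + 1 := by exact_mod_cast hN2
  have hNpos : (0 : ℝ) < N := by nlinarith
  have hbin := binom_lower hp0 hp1 hjN (by exact_mod_cast hNpos)
  have hd := deviation_le hp0 hp1 hdev (by nlinarith) hNpos
  have hcmp := exponent_compare hp0 hp1 (W := n.choose 2) (N := N) (e := e) (j := j) (n := n)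
    (by rcases he with h | h
        · exact Or.inl (by exact_mod_cast h)
        · exact Or.inr h) (by linarith)
  have hmr : (e : ℝ) + j = m := by exact_mod_cast hbj
  rw [hmr] at hcmp
  rw [pow_mul_pow_eq_exp hp0 hp1 hjN] at hbin
  rw [pow_mul_pow_eq_exp hp0 hp1 hmW] at hcount
  set Q : ℝ := j * Real.log p + (N - j) * Real.log (1 - p) with hQ
  set R : ℝ := m * Real.log p + (n.choose 2 - m) * Real.log (1 - p) with hR
  set D : ℝ := 32 / (p * (1 - p)) with hD
  have hforbr : (N.choose j : ℝ) ≤ #(forbGraphs n m) := by exact_mod_cast hforb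
  generalize (#(forbGraphs n m) : ℝ) = F at *
  have hN3 : (N : ℝ) + 1 ≤ (n : ℝ) ^ 2 := by nlinarith
  have h5 : Real.exp (-D) ≤ (n : ℝ) ^ 2 * (F * Real.exp Q) := by
    have h6 : Real.exp (-D) / (N + 1) ≤ F * Real.exp Q :=
      le_trans (by gcongr) (hbin.trans (by gcongr))
    have h7 : 0 ≤ F * Real.exp Q := le_trans (by positivity) h6
    rw [div_le_iff₀ (by positivity)] at h6
    nlinarith
  refine le_of_mul_le_mul_right ?_ (Real.exp_pos R)
  refine hcount.trans ?_
  have h8 : Real.exp (-(n : ℝ) ^ 2 * (-Real.log (1 - p) / 4 + δ)) ≤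
      Real.exp (-D) * Real.exp (D - δ * (n : ℝ) ^ 2 + R - Q) := by
    rw [← Real.exp_add, Real.exp_le_exp]
    linarith
  refine h8.trans ((mul_le_mul_of_nonneg_right h5 (Real.exp_pos _).le).trans_eq ?_)
  have h9 : Real.exp (D - δ * (n : ℝ) ^ 2 + R - Q) =
      Real.exp (D - δ * (n : ℝ) ^ 2) * Real.exp R * (Real.exp Q)⁻¹ := by
    rw [← Real.exp_neg, ← Real.exp_add, ← Real.exp_add]; congr 1
  rw [h9]
  have := (Real.exp_pos Q).ne'
  field_simp

lemma eventually_prefactor_le {D δ ε : ℝ} (hδ : 0 < δ) (hε : 0 < ε) :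
    ∀ᶠ n : ℕ in Filter.atTop, (n : ℝ) ^ 2 * Real.exp (D - δ * (n : ℝ) ^ 2) ≤ ε := by
  filter_upwards [eventually_lower_order (D - Real.log ε) 0 2 hδ, Filter.eventually_ge_atTop 1]
    with n hn h1
  have hn0 : (1 : ℝ) ≤ n := by exact_mod_cast h1
  have hlog : 0 ≤ Real.log n := Real.log_nonneg hn0
  have h2 : (n : ℝ) ^ 2 = Real.exp (2 * Real.log n) := by
    rw [two_mul, Real.exp_add, Real.exp_log (by positivity), sq]
  nth_rewrite 1 [h2]
  rw [← Real.exp_add, ← Real.le_log_iff_exp_le hε]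
  nlinarith

/-- The theorem for `c ≤ 1/2`, uniformly over the edge numbers within `1` of `c * n.choose 2`. -/
lemma main_half {c : ℝ} (hc0 : 0 < c) (hc : c ≤ 1 / 2) : ∃ η : ℝ, 0 < η ∧ ∀ ε : ℝ, 0 < ε →
    ∀ᶠ n : ℕ in Filter.atTop, ∀ m : ℕ, |(m : ℝ) - c * n.choose 2| ≤ 1 →
      (#((badGraphs n η).filter fun G => edgeCount G = m) : ℝ) ≤ ε * #(forbGraphs n m) := by
  have hp0 : 0 < min (2 * c) (1 / 2) := lt_min (by linarith) (by norm_num)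
  obtain ⟨δ, hδ, η, hη, hev⟩ := bad_weight_le hp0 (min_le_right (2 * c) (1 / 2))
  refine ⟨η, hη, fun ε hε => ?_⟩
  filter_upwards [hev, Filter.eventually_ge_atTop 12, eventually_prefactor_le hδ hε]
    with n h1 h2 h3 m hm
  refine (ratio_bound hc0 hc rfl h2 hm h1).trans ?_
  gcongr

/-! ### Complements and conclusion -/

lemma homNum_compl {n : ℕ} (G : SimpleGraph (Fin n)) : homNum Gᶜ = homNum G := by
  unfold homNum
  simp only [compl_compl]
  congr 1
  ext m
  simp only [or_comm]

/-- `C₅` is self-complementary through `i ↦ 2i`. -/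
def cycleComplEmb : cycleGraph 5 ↪g (cycleGraph 5)ᶜ where
  toFun i := 2 * i
  inj' := by decide
  map_rel_iff' := by decide

lemma HasInducedC5.of_compl {V : Type} {G : SimpleGraph V} (h : HasInducedC5 Gᶜ) :
    HasInducedC5 G := by
  obtain ⟨φ⟩ := h
  have ψ : (cycleGraph 5)ᶜ ↪g Gᶜᶜ := Embedding.complEquiv φ
  rw [compl_compl] at ψ
  exact ⟨ψ.comp cycleComplEmb⟩

lemma hasInducedC5_compl {V : Type} {G : SimpleGraph V} : HasInducedC5 Gᶜ ↔ HasInducedC5 G :=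
  ⟨HasInducedC5.of_compl, fun h => HasInducedC5.of_compl (by rwa [compl_compl])⟩

lemma edgeCount_add_of_isCompl {n : ℕ} {G H : SimpleGraph (Fin n)} (h : IsCompl G H) :
    edgeCount G + edgeCount H = n.choose 2 := by
  rw [edgeCount_eq, edgeCount_eq, ← card_top_edges, ← card_union_of_disjoint
    (disjoint_edgeFinset.2 h.disjoint), ← edgeFinset_sup]
  congr 1
  rw [edgeFinset_inj]
  exact h.sup_eq_top

lemma edgeCount_add_compl {n : ℕ} (G : SimpleGraph (Fin n)) :
    edgeCount G + edgeCount Gᶜ = n.choose 2 :=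
  edgeCount_add_of_isCompl isCompl_compl

lemma card_bad_compl (n m : ℕ) (η : ℝ) :
    #((badGraphs n η).filter fun G => edgeCount G = m) ≤
      #((badGraphs n η).filter fun G => edgeCount G = n.choose 2 - m) := by
  refine card_le_card_of_injOn (fun G => Gᶜ) (fun G hG => ?_) (compl_injective.injOn)
  have h := edgeCount_add_compl G
  simp only [badGraphs, coe_filter, mem_filter, mem_univ, true_and, Set.mem_ofPred_eq] at hG ⊢
  rw [hasInducedC5_compl, homNum_compl]
  exact ⟨hG.1, by omega⟩

lemma card_forb_compl {n m : ℕ} (hm : m ≤ n.choose 2) :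
    #(forbGraphs n (n.choose 2 - m)) ≤ #(forbGraphs n m) := by
  refine card_le_card_of_injOn (fun G => Gᶜ) (fun G hG => ?_) (compl_injective.injOn)
  have h := edgeCount_add_compl G
  simp only [forbGraphs, coe_filter, mem_univ, true_and, Set.mem_ofPred_eq] at hG ⊢
  rw [hasInducedC5_compl]
  exact ⟨hG.1, by omega⟩

/-- For `c ≥ 1/2` one passes to the complements, which have density near `1 - c`. -/
lemma main_all {c : ℝ} (hc0 : 0 < c) (hc1 : c < 1) : ∃ η : ℝ, 0 < η ∧ ∀ ε : ℝ, 0 < ε →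
    ∀ᶠ n : ℕ in Filter.atTop, ∀ m : ℕ, m ≤ n.choose 2 → |(m : ℝ) - c * n.choose 2| ≤ 1 →
      (#((badGraphs n η).filter fun G => edgeCount G = m) : ℝ) ≤ ε * #(forbGraphs n m) := by
  rcases le_total c (1 / 2) with h | h
  · obtain ⟨η, hη, H⟩ := main_half hc0 h
    exact ⟨η, hη, fun ε hε => (H ε hε).mono fun n hn m _ hm => hn m hm⟩
  · obtain ⟨η, hη, H⟩ := main_half (c := 1 - c) (by linarith) (by linarith)
    refine ⟨η, hη, fun ε hε => (H ε hε).mono fun n hn m hmW hm => ?_⟩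
    have h1 := hn (n.choose 2 - m) (by
      rw [Nat.cast_sub hmW, show (n.choose 2 : ℝ) - m - (1 - c) * n.choose 2 =
        -((m : ℝ) - c * n.choose 2) by ring, abs_neg]
      exact hm)
    have h2 : (#((badGraphs n η).filter fun G => edgeCount G = m) : ℝ) ≤
        #((badGraphs n η).filter fun G => edgeCount G = n.choose 2 - m) := by
      exact_mod_cast card_bad_compl n m η
    have h3 : (#(forbGraphs n (n.choose 2 - m)) : ℝ) ≤ #(forbGraphs n m) := by
      exact_mod_cast card_forb_compl hmW
    exact h2.trans (h1.trans (by gcongr))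

/-- For every `0 < c < 1` there exists `η > 0` such that
`|Forb*_{n,η}(C₅,c)| / |Forb*_n(C₅,c)| → 0` as `n → ∞`: almost all graphs on `n` vertices with
`⌊c·C(n,2)⌋` edges and no induced `C₅` contain a homogeneous set of size at least `ηn`. -/
theorem stmt3 (c : ℝ) (hc0 : 0 < c) (hc1 : c < 1) :
    ∃ η : ℝ, 0 < η ∧
      Filter.Tendsto (fun n : ℕ => ((ForbC5eta n c η).card : ℝ) / ((ForbC5 n c).card : ℝ))
        Filter.atTop (nhds 0) := by
  obtain ⟨η, hη, H⟩ := main_all hc0 hc1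
  refine ⟨η, hη, ?_⟩
  rw [Metric.tendsto_atTop']
  intro ε hε
  obtain ⟨n₀, hn₀⟩ := Filter.eventually_atTop.1 (H (ε / 2) (by linarith))
  refine ⟨n₀, fun n hn => ?_⟩
  have hcW : 0 ≤ c * (n.choose 2 : ℝ) := by positivity
  have hfl := Nat.floor_le hcW
  have hlt := Nat.lt_floor_add_one (c * (n.choose 2 : ℝ))
  have hle : ⌊c * (n.choose 2 : ℝ)⌋₊ ≤ n.choose 2 := by
    have : c * (n.choose 2 : ℝ) ≤ 1 * n.choose 2 := by gcongr
    have : (⌊c * (n.choose 2 : ℝ)⌋₊ : ℝ) ≤ n.choose 2 := by linarith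
    exact_mod_cast this
  have key := hn₀ n hn.le _ hle (abs_le.2 ⟨by linarith, by linarith⟩)
  have e1 : (badGraphs n η).filter (fun G => edgeCount G = ⌊c * (n.choose 2 : ℝ)⌋₊) =
      ForbC5eta n c η := by
    ext G
    simp only [badGraphs, ForbC5eta, ForbC5, mem_filter, mem_univ, true_and]
    tauto
  have e2 : forbGraphs n ⌊c * (n.choose 2 : ℝ)⌋₊ = ForbC5 n c := rfl
  rw [e1, e2] at key
  rw [Real.dist_eq, sub_zero, abs_of_nonneg (by positivity)]
  exact (div_le_of_le_mul₀ (by positivity) (by linarith) key).trans_lt (by linarith)
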